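/- arXiv:1409.4402 — 9 statements merged into one kernel-verified Lean document; each statement's English description precedes it below -/
import Mathlib

section
/- Let λ ∈ (0, 1/2] and let f : ℝ → ℝ be C² with f'(0) ≥ 0, with f'' globally Lipschitz, and with |f''| uniformly bounded. Let Ω = {(Y,T) ∈ ℝ² : T ≥ 0, Y ≥ −f'(0) T}. For a C¹ function w₀ : [0,∞) → ℝ with w₀(0) = 0 and w₀'(0) = 0, define data for the semi-linear system by: Y(x) = ∫₀^x (1 + (w₀'(x'))²)^{1/(2λ)} dx' (a strictly increasing bijection of [0,∞) onto itself with inverse x(·)), ū(Y) = w₀(x(Y)), v̄(Y) = 2 arctan(w₀'(x(Y))), ξ̄(Y) = 1, with boundary values (0,0,1) on Y = −f'(0)T, and let (u, v, ξ) be the corresponding unique solution of the system u_Y = (1/2) ξ sin v (cos²(v/2))^{1/(2λ)−1}, v_T = −2λ f''(u) sin²(v/2), ξ_T = (1/2) f''(u) ξ sin v on Ω. If u₀^k is a sequence of such C¹ functions with u₀^k → u₀ and (u₀^k)' → u₀' uniformly on every bounded subset of [0,∞), then the corresponding solutions satisfy (u^k, v^k, ξ^k) → (u, v, ξ) uniformly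 on every bounded subset of Ω. -/
/-!
Continued to the left of the boundary ray by their boundary values, solutions live on a rectangle,
where the state `q = (v, ξ)` satisfies an ordinary differential equation on every vertical line and
`u` is an integral of a locally Lipschitz function of `q` along horizontal ones. Gronwall's
inequality on vertical lines bounds `q` and shows that it is continuous in `Y`; applied to all
vertical lines simultaneously it bounds the distance between two solutions by the distance between
their initial states.

Nothing is known in advance about the joint measurability of a solution, so the integral defining
`u(Y, T)` could take its junk value `0`. The times at which its integrand is measurable form a
closed set, on which the integral is continuous in `T`, so `u(Y, ·)` is measurable all the same.

The initial states converge because the energy coordinates expand distances: uniform convergence of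
these coordinates passes to their inverses, hence to `v̄ = 2 arctan (w₀' ∘ x)`.
-/

open Real Set MeasureTheory Filter

/-- The domain `Ω = {(Y,T) : T ≥ 0, Y ≥ −a T}` (with `a = f'(0) ≥ 0`). -/
def OmegaDom (a : ℝ) : Set (ℝ × ℝ) := {p : ℝ × ℝ | 0 ≤ p.2 ∧ -a * p.2 ≤ p.1}

/-- The starting time of the vertical segment of `Ω` over `Y`:
`T₀(Y) = 0` for `Y ≥ 0` and `T₀(Y) = −Y/a` for `Y < 0`. -/
noncomputable def T0 (a Y : ℝ) : ℝ := if 0 ≤ Y then 0 else -Y / a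

/-- `(u,v,ξ)` is a solution of the semi-linear system
`u_Y = (1/2) ξ sin v (cos²(v/2))^{1/(2λ)−1}`, `v_T = −2λ f''(u) sin²(v/2)`,
`ξ_T = (1/2) f''(u) ξ sin v` on `Ω = {T ≥ 0, Y ≥ −f'(0)T}` (equations taken in
integrated form), with initial data `(ū, v̄, 1)` on `{Y ≥ 0, T = 0}` and
boundary data `(0,0,1)` on the ray `Y = −f'(0)T`. -/
def IsSolSemilinear (lam : ℝ) (f : ℝ → ℝ) (ubar vbar : ℝ → ℝ)
    (u v ξ : ℝ → ℝ → ℝ) : Prop :=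
  (∀ T : ℝ, 0 ≤ T → ∀ r : ℝ, ∃ K : NNReal,
      LipschitzOnWith K (fun Y => u Y T) (Icc (-(deriv f 0) * T) r)) ∧
  (∀ Y : ℝ, ∀ r : ℝ, ∃ K : NNReal,
      LipschitzOnWith K (fun T => v Y T) (Icc (T0 (deriv f 0) Y) r) ∧
      LipschitzOnWith K (fun T => ξ Y T) (Icc (T0 (deriv f 0) Y) r)) ∧
  (∀ Y : ℝ, 0 ≤ Y → u Y 0 = ubar Y ∧ v Y 0 = vbar Y ∧ ξ Y 0 = 1) ∧
  (∀ T : ℝ, 0 ≤ T →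
      u (-(deriv f 0) * T) T = 0 ∧ v (-(deriv f 0) * T) T = 0 ∧
      ξ (-(deriv f 0) * T) T = 1) ∧
  (∀ p ∈ OmegaDom (deriv f 0),
      u p.1 p.2 = ∫ z in (-(deriv f 0) * p.2)..p.1,
        (1/2) * ξ z p.2 * sin (v z p.2) * (cos (v z p.2 / 2) ^ 2) ^ (1/(2*lam) - 1)) ∧
  (∀ p ∈ OmegaDom (deriv f 0),
      (v p.1 p.2 = v p.1 (T0 (deriv f 0) p.1)
        + ∫ s in (T0 (deriv f 0) p.1)..p.2,
            -2 * lam * deriv (deriv f) (u p.1 s) * sin (v p.1 s / 2) ^ 2) ∧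
      (ξ p.1 p.2 = ξ p.1 (T0 (deriv f 0) p.1)
        + ∫ s in (T0 (deriv f 0) p.1)..p.2,
            (1/2) * deriv (deriv f) (u p.1 s) * ξ p.1 s * sin (v p.1 s)))

/-- The energy-dependent coordinate change associated with `C¹` initial data
`w₀`: `Y(x) = ∫₀ˣ (1 + (w₀'(x'))²)^{1/(2λ)} dx'`. -/
noncomputable def Yfun (lam : ℝ) (w₀ : ℝ → ℝ) (x : ℝ) : ℝ :=
  ∫ y in (0:ℝ)..x, (1 + (deriv w₀ y) ^ 2) ^ (1/(2*lam))

/-- `(ū, v̄)` are the data for the semi-linear system obtained from the `C¹`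
initial datum `w₀` through the coordinate change `Yfun`:
`ū(Y(x)) = w₀(x)` and `v̄(Y(x)) = 2 arctan(w₀'(x))` for `x ≥ 0`. -/
def DataOf (lam : ℝ) (w₀ ubar vbar : ℝ → ℝ) : Prop :=
  ∀ x : ℝ, 0 ≤ x →
    ubar (Yfun lam w₀ x) = w₀ x ∧ vbar (Yfun lam w₀ x) = 2 * arctan (deriv w₀ x)

open scoped Topology NNReal Uniformity

theorem mul_integral_exp_add_exp (K ε c T : ℝ) :
    K * ∫ s in (0 : ℝ)..T, (ε * exp (K * s) + c * exp (2 * K * s)) =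
      ε * (exp (K * T) - 1) + c / 2 * (exp (2 * K * T) - 1) := by
  have hexp (m s : ℝ) : HasDerivAt (fun s ↦ exp (m * s)) (exp (m * s) * m) s := by
    simpa using ((hasDerivAt_id s).const_mul m).exp
  have hderiv (s : ℝ) : HasDerivAt (fun s ↦ ε * exp (K * s) + c / 2 * exp (2 * K * s))
      (K * (ε * exp (K * s) + c * exp (2 * K * s))) s :=
    (((hexp K s).const_mul ε).add ((hexp (2 * K) s).const_mul (c / 2))).congr_deriv (by ring)
  rw [← intervalIntegral.integral_const_mul,
    intervalIntegral.integral_eq_sub_of_hasDerivAt (fun s _ ↦ hderiv s)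
      (Continuous.intervalIntegrable (by fun_prop) _ _)]
  simp only [mul_zero, exp_zero]
  ring

theorem le_mul_exp_of_forall_majorant {α : Type*} {x : α → ℝ → ℝ} {ε K B τ : ℝ} (hK : 0 ≤ K)
    (hB : ∀ i, ∀ T ∈ Icc 0 τ, x i T ≤ B)
    (h : ∀ b : ℝ → ℝ, Continuous b → (∀ i, ∀ s ∈ Icc 0 τ, x i s ≤ b s) →
      ∀ i, ∀ T ∈ Icc 0 τ, x i T ≤ ε + K * ∫ s in (0 : ℝ)..T, b s)
    (i : α) {T : ℝ} (hT : T ∈ Icc 0 τ) : x i T ≤ ε * exp (K * T) := by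
  set A := |B| + |ε| with hA
  -- Each pass through the integral inequality halves the coefficient of `exp (2 * K * T)`.
  have hiter (n : ℕ) : ∀ i, ∀ T ∈ Icc 0 τ,
      x i T ≤ ε * exp (K * T) + A / 2 ^ n * exp (2 * K * T) := by
    induction n with
    | zero =>
      intro i T hT
      have h1 : exp (K * T) ≤ exp (2 * K * T) := exp_le_exp.2 (by linarith [mul_nonneg hK hT.1])
      have h2 : 1 ≤ exp (2 * K * T) := one_le_exp (by have := hT.1; positivity)
      have h3 : -ε * exp (K * T) ≤ |ε| * exp (2 * K * T) := by
        gcongr; exact neg_le_abs ε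
      have h4 : |B| ≤ |B| * exp (2 * K * T) := le_mul_of_one_le_right (abs_nonneg B) h2
      have := hB i T hT
      have := le_abs_self B
      rw [hA]
      linarith
    | succ n ih =>
      intro i T hT
      have hA0 : 0 ≤ A / 2 ^ n := by positivity
      have := h _ (by fun_prop) ih i T hT
      rw [mul_integral_exp_add_exp] at this
      rw [pow_succ, ← div_div]
      linarith
  refine ge_of_tendsto' (x := atTop) ?_ fun n ↦ hiter n i T hT
  have hpow : Tendsto (fun n : ℕ ↦ A / 2 ^ n) atTop (𝓝 0) :=
    tendsto_const_nhds.div_atTop (tendsto_pow_atTop_atTop_of_one_lt one_lt_two)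
  simpa using (hpow.mul_const (exp (2 * K * T))).const_add (ε * exp (K * T))

theorem le_mul_exp_of_le_add_mul_integral {x : ℝ → ℝ} {ε K τ : ℝ} (hK : 0 ≤ K)
    (hx : ContinuousOn x (Icc 0 τ))
    (h : ∀ T ∈ Icc 0 τ, x T ≤ ε + K * ∫ s in (0 : ℝ)..T, x s) {T : ℝ} (hT : T ∈ Icc 0 τ) :
    x T ≤ ε * exp (K * T) := by
  obtain ⟨B, hB⟩ := isCompact_Icc.bddAbove_image hx
  refine le_mul_exp_of_forall_majorant (x := fun _ : Unit ↦ x) hK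
    (fun _ s hs ↦ hB ⟨s, hs, rfl⟩) (fun b hb hxb _ T hT ↦ (h T hT).trans ?_) () hT
  have hsub : Icc 0 T ⊆ Icc 0 τ := Icc_subset_Icc_right hT.2
  gcongr
  refine intervalIntegral.integral_mono_on hT.1 ?_ (hb.intervalIntegrable _ _)
    fun s hs ↦ hxb () s (hsub hs)
  exact (hx.mono (by rwa [uIcc_of_le hT.1])).intervalIntegrable

theorem norm_le_mul_exp_of_eq_add_integral {ι : Type*} [Fintype ι] {q H : ℝ → ι → ℝ} {M τ : ℝ}
    (hM : 0 ≤ M) (hq : ContinuousOn q (Icc 0 τ)) (hH : ∀ t ∈ Icc 0 τ, ‖H t‖ ≤ M * ‖q t‖)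
    (h : ∀ T ∈ Icc 0 τ, ∀ i, q T i = q 0 i + ∫ t in (0 : ℝ)..T, H t i) {T : ℝ}
    (hT : T ∈ Icc 0 τ) : ‖q T‖ ≤ ‖q 0‖ * exp (M * T) := by
  refine le_mul_exp_of_le_add_mul_integral hM hq.norm (fun T hT ↦ ?_) hT
  have hsub : Icc 0 T ⊆ Icc 0 τ := Icc_subset_Icc_right hT.2
  have hint : IntervalIntegrable (fun t ↦ ‖q t‖) volume 0 T :=
    (hq.norm.mono (by rwa [uIcc_of_le hT.1])).intervalIntegrable
  have hI0 : 0 ≤ ∫ t in (0 : ℝ)..T, ‖q t‖ :=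
    intervalIntegral.integral_nonneg hT.1 fun t _ ↦ norm_nonneg _
  refine (pi_norm_le_iff_of_nonneg (by positivity)).2 fun i ↦ ?_
  rw [h T hT i, ← intervalIntegral.integral_const_mul]
  refine (norm_add_le _ _).trans (add_le_add (norm_le_pi_norm _ i) ?_)
  exact intervalIntegral.norm_integral_le_of_norm_le hT.1
    (ae_of_all _ fun t ht ↦ (norm_le_pi_norm (H t) i).trans (hH t (hsub (Ioc_subset_Icc_self ht))))
    (hint.const_mul M)

section ParametricIntegral

variable {X Z E : Type*} [TopologicalSpace X] [FirstCountableTopology X]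
  [MeasurableSpace Z] {μ : Measure Z} [NormedAddCommGroup E] {h : X → Z → E} {s : Set X}

theorem isClosed_setOf_aestronglyMeasurable (hs : IsClosed s)
    (hc : ∀ᵐ z ∂μ, ContinuousOn (h · z) s) :
    IsClosed {x ∈ s | AEStronglyMeasurable (h x) μ} := by
  refine IsSeqClosed.isClosed fun xs x hxs hx ↦ ?_
  have hxs' : Tendsto xs atTop (𝓝[s] x) :=
    tendsto_nhdsWithin_iff.2 ⟨hx, Eventually.of_forall fun n ↦ (hxs n).1⟩
  have hmem : x ∈ s := hs.mem_of_tendsto hx (Eventually.of_forall fun n ↦ (hxs n).1)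
  refine ⟨hmem, aestronglyMeasurable_of_tendsto_ae atTop (fun n ↦ (hxs n).2) ?_⟩
  filter_upwards [hc] with z hz using (hz x hmem).tendsto.comp hxs'

theorem aestronglyMeasurable_integral_of_continuousOn_param [NormedSpace ℝ E] [MeasurableSpace X]
    [OpensMeasurableSpace X] [SecondCountableTopologyEither X E] {ν : Measure X} {bound : Z → ℝ}
    (hs : IsClosed s) (hc : ∀ᵐ z ∂μ, ContinuousOn (h · z) s)
    (hb : ∀ x ∈ s, ∀ᵐ z ∂μ, ‖h x z‖ ≤ bound z) (hbi : Integrable bound μ) :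
    AEStronglyMeasurable (fun x ↦ ∫ z, h x z ∂μ) (ν.restrict s) := by
  set G := {x ∈ s | AEStronglyMeasurable (h x) μ}
  have hG : IsClosed G := isClosed_setOf_aestronglyMeasurable hs hc
  have hcont : ContinuousOn (fun x ↦ ∫ z, h x z ∂μ) G :=
    continuousOn_of_dominated (fun x hx ↦ hx.2) (fun x hx ↦ hb x hx.1) hbi <| by
      filter_upwards [hc] with z hz using hz.mono (sep_subset _ _)
  rw [← aestronglyMeasurable_indicator_iff hs.measurableSet]
  -- Off `G` the integral takes its junk value `0`.
  have hind : s.indicator (fun x ↦ ∫ z, h x z ∂μ) = G.indicator (fun x ↦ ∫ z, h x z ∂μ) := by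
    ext x
    by_cases hx : x ∈ s
    · by_cases hxG : x ∈ G
      · rw [indicator_of_mem hx, indicator_of_mem hxG]
      · rw [indicator_of_mem hx, indicator_of_notMem hxG,
          integral_non_aestronglyMeasurable fun hm ↦ hxG ⟨hx, hm⟩]
    · rw [indicator_of_notMem hx, indicator_of_notMem fun hxG ↦ hx hxG.1]
  rw [hind, aestronglyMeasurable_indicator_iff hG.measurableSet]
  exact hcont.aestronglyMeasurable hG.measurableSet

end ParametricIntegral

theorem integral_eq_integral_max_of_forall_Ioc_eq_zero {G : ℝ → ℝ} {a b c : ℝ} (hab : a ≤ b)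
    (hac : a ≤ c) (hG : ∀ z ∈ Ioc a b, G z = 0) : ∫ z in a..c, G z = ∫ z in b..max c b, G z := by
  rcases le_total b c with hbc | hcb
  · rw [max_eq_left hbc, intervalIntegral.integral_of_le hac, intervalIntegral.integral_of_le hbc]
    refine setIntegral_eq_of_subset_of_forall_sdiff_eq_zero measurableSet_Ioc
      (Ioc_subset_Ioc_left hab) fun z hz ↦ hG z ⟨hz.1.1, ?_⟩
    exact not_lt.1 fun hlt ↦ hz.2 ⟨hlt, hz.1.2⟩
  · rw [max_eq_right hcb, intervalIntegral.integral_same, intervalIntegral.integral_of_le hac]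
    exact setIntegral_eq_zero_of_forall_eq_zero fun z hz ↦ hG z ⟨hz.1, hz.2.trans hcb⟩

theorem exists_forall_norm_le_of_lipschitzOnWith {X E : Type*} [PseudoMetricSpace X]
    [SeminormedAddCommGroup E] {g : X → E} {s : Set X} {Λ : ℝ≥0} (hs : Bornology.IsBounded s)
    (hg : LipschitzOnWith Λ g s) : ∃ C, ∀ x ∈ s, ‖g x‖ ≤ C := by
  rcases s.eq_empty_or_nonempty with rfl | ⟨x₀, hx₀⟩
  · exact ⟨0, by simp⟩
  refine ⟨‖g x₀‖ + Λ * Metric.diam s, fun x hx ↦ ?_⟩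
  calc ‖g x‖ ≤ ‖g x₀‖ + dist (g x) (g x₀) := by
        rw [dist_eq_norm]
        exact norm_le_norm_add_norm_sub' _ _
    _ ≤ ‖g x₀‖ + Λ * dist x x₀ := by gcongr; exact hg.dist_le_mul x hx x₀ hx₀
    _ ≤ ‖g x₀‖ + Λ * Metric.diam s := by gcongr; exact Metric.dist_le_diam_of_mem hs hx hx₀

theorem lipschitzOnWith_smul_prod {X Y E : Type*} [PseudoMetricSpace X] [PseudoMetricSpace Y]
    [NormedAddCommGroup E] [NormedSpace ℝ E] {F : X → ℝ} {B : Y → E} {s : Set Y}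
    {L M K C : ℝ≥0} (hF : LipschitzWith L F) (hM : ∀ x, ‖F x‖ ≤ M) (hB : LipschitzOnWith K B s)
    (hC : ∀ q ∈ s, ‖B q‖ ≤ C) :
    LipschitzOnWith (L * C + M * K) (fun p : X × Y ↦ F p.1 • B p.2) (univ ×ˢ s) := by
  refine LipschitzOnWith.of_dist_le_mul fun (x, q) hp (y, q') hp' ↦ ?_
  have hq : q ∈ s := hp.2
  have hq' : q' ∈ s := hp'.2
  set d := dist (x, q) (y, q')
  calc dist (F x • B q) (F y • B q')
      ≤ dist (F x • B q) (F y • B q) + dist (F y • B q) (F y • B q') := dist_triangle _ _ _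
    _ = dist (F x) (F y) * ‖B q‖ + ‖F y‖ * dist (B q) (B q') := by
        rw [dist_smul₀, dist_eq_norm, ← sub_smul, norm_smul, ← dist_eq_norm]
    _ ≤ L * d * C + M * (K * d) := by
        gcongr
        · exact (hF.dist_le_mul x y).trans (by gcongr; exact le_max_left _ _)
        · exact hC q hq
        · exact hM y
        · exact (hB.dist_le_mul q hq q' hq').trans (by gcongr; exact le_max_right _ _)
    _ = ↑(L * C + M * K) * d := by push_cast; ring

theorem hasDerivAt_mul_sq_rpow {p : ℝ} (hp : 0 ≤ p) (x : ℝ) :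
    HasDerivAt (fun c : ℝ ↦ c * (c ^ 2) ^ p) ((1 + 2 * p) * (x ^ 2) ^ p) x := by
  have hcont : Continuous fun c : ℝ ↦ (c ^ 2) ^ p := (continuous_pow 2).rpow_const fun _ ↦ .inr hp
  have hne : ∀ y : ℝ, y ≠ 0 →
      HasDerivAt (fun c : ℝ ↦ c * (c ^ 2) ^ p) ((1 + 2 * p) * (y ^ 2) ^ p) y := by
    intro y hy
    have hy2 : y ^ 2 ≠ 0 := pow_ne_zero 2 hy
    refine ((hasDerivAt_id y).mul (((hasDerivAt_pow 2 y).rpow_const (.inl hy2)))).congr_deriv ?_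
    rw [rpow_sub_one hy2, id]
    field_simp
    push_cast
    ring
  rcases eq_or_ne x 0 with rfl | hx
  · exact hasDerivAt_of_hasDerivAt_of_ne hne (continuous_id.mul hcont).continuousAt
      (continuous_const.mul hcont).continuousAt
  · exact hne x hx

theorem contDiff_mul_sq_rpow {p : ℝ} (hp : 0 ≤ p) : ContDiff ℝ 1 fun c : ℝ ↦ c * (c ^ 2) ^ p := by
  refine contDiff_one_iff_deriv.2 ⟨fun x ↦ (hasDerivAt_mul_sq_rpow hp x).differentiableAt, ?_⟩
  rw [funext fun x ↦ (hasDerivAt_mul_sq_rpow hp x).deriv]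
  exact continuous_const.mul ((continuous_pow 2).rpow_const fun _ ↦ .inr hp)

theorem continuous_one_add_sq_rpow (p : ℝ) : Continuous fun s : ℝ ↦ (1 + s ^ 2) ^ p :=
  (by fun_prop : Continuous fun s : ℝ ↦ 1 + s ^ 2).rpow_const fun s ↦ .inl (by positivity)

theorem tendstoLocallyUniformlyOn_comp {κ α β γ : Type*} [TopologicalSpace α] [UniformSpace β]
    [UniformSpace γ] {l : Filter κ} {F : κ → β → γ} {f : β → γ} {X : κ → α → β} {x : α → β}
    {s : Set α} {t : Set β} (hF : TendstoLocallyUniformlyOn F f l t) (hf : ContinuousOn f t)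
    (hX : TendstoLocallyUniformlyOn X x l s) (hx : ContinuousOn x s)
    (hXt : ∀ k, MapsTo (X k) s t) (hxt : MapsTo x s t) :
    TendstoLocallyUniformlyOn (fun k a ↦ F k (X k a)) (fun a ↦ f (x a)) l s := by
  rw [tendstoLocallyUniformlyOn_iff_forall_tendsto] at hF hX ⊢
  intro a ha
  have hs : ∀ᶠ p : κ × α in l ×ˢ 𝓝[s] a, p.2 ∈ s := tendsto_snd.eventually self_mem_nhdsWithin
  have hlim : Tendsto (fun p : κ × α ↦ x p.2) (l ×ˢ 𝓝[s] a) (𝓝 (x a)) :=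
    (hx a ha).tendsto.comp tendsto_snd
  have hlimX : Tendsto (fun p : κ × α ↦ X p.1 p.2) (l ×ˢ 𝓝[s] a) (𝓝[t] (x a)) :=
    tendsto_nhdsWithin_iff.2 ⟨hlim.congr_uniformity (hX a ha), hs.mono fun p hp ↦ hXt p.1 hp⟩
  have hlim' : Tendsto (fun p : κ × α ↦ x p.2) (l ×ˢ 𝓝[s] a) (𝓝[t] (x a)) :=
    tendsto_nhdsWithin_iff.2 ⟨hlim, hs.mono fun p hp ↦ hxt hp⟩
  have hfx : Tendsto (fun p : κ × α ↦ (f (x p.2), f (X p.1 p.2))) (l ×ˢ 𝓝[s] a) (𝓤 γ) :=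
    (((hf _ (hxt ha)).tendsto.comp hlim').prodMk_nhds
      ((hf _ (hxt ha)).tendsto.comp hlimX)).mono_right (nhds_le_uniformity _)
  exact hfx.uniformity_trans ((hF _ (hxt ha)).comp (tendsto_fst.prodMk hlimX))

theorem tendstoUniformlyOn_comp_of_continuous {κ α β γ : Type*} [TopologicalSpace α]
    [UniformSpace β] [UniformSpace γ] {l : Filter κ} {f : β → γ} {X : κ → α → β} {x : α → β}
    {s : Set α} (hf : Continuous f) (hs : IsCompact s) (hX : TendstoUniformlyOn X x l s)
    (hx : ContinuousOn x s) : TendstoUniformlyOn (fun k a ↦ f (X k a)) (fun a ↦ f (x a)) l s := by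
  rw [← tendstoLocallyUniformlyOn_iff_tendstoUniformlyOn_of_compact hs] at hX ⊢
  have hconst : TendstoLocallyUniformlyOn (fun _ : κ ↦ f) f l univ := fun u hu b _ ↦
    ⟨univ, univ_mem, .of_forall fun _ _ _ ↦ refl_mem_uniformity hu⟩
  exact tendstoLocallyUniformlyOn_comp hconst hf.continuousOn hX hx
    (fun k ↦ mapsTo_univ _ _) (mapsTo_univ _ _)

theorem tendstoUniformlyOn_intervalIntegral {κ E : Type*} [NormedAddCommGroup E] [NormedSpace ℝ E]
    {l : Filter κ} {F : κ → ℝ → E} {f : ℝ → E} {a b : ℝ} (hF : ∀ k, ContinuousOn (F k) (Icc a b))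
    (hf : ContinuousOn f (Icc a b)) (h : TendstoUniformlyOn F f l (Icc a b)) :
    TendstoUniformlyOn (fun k x ↦ ∫ y in a..x, F k y) (fun x ↦ ∫ y in a..x, f y) l (Icc a b) := by
  rcases lt_or_ge b a with hba | hab
  · simp [Icc_eq_empty hba.not_ge, tendstoUniformlyOn_empty]
  rw [Metric.tendstoUniformlyOn_iff] at h ⊢
  intro ε hε
  have hab' : 0 < b - a + 1 := by linarith
  filter_upwards [h (ε / (b - a + 1)) (by positivity)] with k hk x hx
  have hint : ∀ g : ℝ → E, ContinuousOn g (Icc a b) → IntervalIntegrable g volume a x := fun g hg ↦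
    (hg.mono (by rw [uIcc_of_le hx.1]; exact Icc_subset_Icc_right hx.2)).intervalIntegrable
  calc dist (∫ y in a..x, f y) (∫ y in a..x, F k y)
      = ‖∫ y in a..x, (f y - F k y)‖ := by
        rw [dist_eq_norm, intervalIntegral.integral_sub (hint _ hf) (hint _ (hF k))]
    _ ≤ ε / (b - a + 1) * |x - a| := by
        refine intervalIntegral.norm_integral_le_of_norm_le_const fun y hy ↦ ?_
        rw [uIoc_of_le hx.1] at hy
        rw [← dist_eq_norm]
        exact (hk y ⟨hy.1.le, hy.2.trans hx.2⟩).le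
    _ < ε := by
        rw [abs_of_nonneg (sub_nonneg.2 hx.1), div_mul_eq_mul_div, div_lt_iff₀ hab']
        gcongr
        linarith [hx.2]

theorem tendstoUniformlyOn_of_antilipschitzWith {κ α β : Type*} [PseudoMetricSpace α]
    [PseudoMetricSpace β] {l : Filter κ} {K : ℝ≥0} {F : κ → α → β} {f : α → β} {X : κ → β → α}
    {x : β → α} {s : Set β} {t : Set α} (hF : ∀ k, AntilipschitzWith K (F k))
    (h : TendstoUniformlyOn F f l t) (hX : ∀ k, RightInvOn (X k) (F k) s) (hx : RightInvOn x f s)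
    (hxt : MapsTo x s t) : TendstoUniformlyOn X x l s := by
  rw [Metric.tendstoUniformlyOn_iff] at h ⊢
  intro ε hε
  have hK : 0 < (K : ℝ) + 1 := by positivity
  filter_upwards [h (ε / (K + 1)) (by positivity)] with k hk b hb
  calc dist (x b) (X k b) ≤ K * dist (F k (x b)) (F k (X k b)) := (hF k).le_mul_dist _ _
    _ = K * dist (f (x b)) (F k (x b)) := by rw [hX k hb, hx hb, dist_comm]
    _ ≤ K * (ε / (K + 1)) := by gcongr; exact (hk _ (hxt hb)).le
    _ < ε := by rw [mul_div_assoc', div_lt_iff₀ hK]; linarith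

/-! ### Solutions on a rectangle -/

/-- The pair `(u, q)` solves the integrated form of the semi-linear system `u_Y = g(q)`,
`q_T = Φ(u, q)` on the rectangle `[z₀, r] × [0, τ]`, with `u = 0` on `Y = z₀` and with `q` staying
in `s`. The second equation is required componentwise, so that nothing has to be known about the
integrability of its right-hand side. -/
structure IsRectSolution {ι : Type*} [Fintype ι] (g : (ι → ℝ) → ℝ) (Φ : ℝ × (ι → ℝ) → ι → ℝ)
    (s : Set (ι → ℝ)) (z₀ r τ : ℝ) (u : ℝ → ℝ → ℝ) (q : ℝ → ℝ → ι → ℝ) : Prop where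
  continuousOn_init : ContinuousOn (q · 0) (Icc z₀ r)
  continuousOn_u : ∀ T ∈ Icc 0 τ, ContinuousOn (u · T) (Icc z₀ r)
  continuousOn_q : ∀ Y ∈ Icc z₀ r, ContinuousOn (q Y) (Icc 0 τ)
  mem : ∀ Y ∈ Icc z₀ r, ∀ T ∈ Icc 0 τ, q Y T ∈ s
  u_eq : ∀ Y ∈ Icc z₀ r, ∀ T ∈ Icc 0 τ, u Y T = ∫ z in z₀..Y, g (q z T)
  q_eq : ∀ Y ∈ Icc z₀ r, ∀ T ∈ Icc 0 τ, ∀ i,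
    q Y T i = q Y 0 i + ∫ t in (0 : ℝ)..T, Φ (u Y t, q Y t) i

namespace IsRectSolution

variable {ι : Type*} [Fintype ι] {g : (ι → ℝ) → ℝ} {Φ : ℝ × (ι → ℝ) → ι → ℝ} {s : Set (ι → ℝ)}
  {z₀ r τ C : ℝ} {K Λ : ℝ≥0} {u u₁ u₂ : ℝ → ℝ → ℝ} {q q₁ q₂ : ℝ → ℝ → ι → ℝ}

theorem norm_u_le (h : IsRectSolution g Φ s z₀ r τ u q) (hC : ∀ x ∈ s, ‖g x‖ ≤ C) {Y T : ℝ}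
    (hY : Y ∈ Icc z₀ r) (hT : T ∈ Icc 0 τ) : ‖u Y T‖ ≤ C * (Y - z₀) := by
  rw [h.u_eq Y hY T hT, ← abs_of_nonneg (sub_nonneg.2 hY.1)]
  refine intervalIntegral.norm_integral_le_of_norm_le_const fun z hz ↦ hC _ (h.mem z ?_ T hT)
  rw [uIoc_of_le hY.1] at hz
  exact ⟨hz.1.le, hz.2.trans hY.2⟩

theorem aestronglyMeasurable_u (h : IsRectSolution g Φ s z₀ r τ u q) (hg : ContinuousOn g s)
    (hC : ∀ x ∈ s, ‖g x‖ ≤ C) {Y : ℝ} (hY : Y ∈ Icc z₀ r) :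
    AEStronglyMeasurable (u Y) (volume.restrict (Icc 0 τ)) := by
  have hz : ∀ z ∈ Ioc z₀ Y, z ∈ Icc z₀ r := fun z hz ↦ ⟨hz.1.le, hz.2.trans hY.2⟩
  refine (aestronglyMeasurable_integral_of_continuousOn_param isClosed_Icc
    (h := fun t z ↦ g (q z t)) (μ := volume.restrict (Ioc z₀ Y)) (bound := fun _ ↦ C)
    ?_ (fun t ht ↦ ?_) (integrable_const C)).congr ?_
  · filter_upwards [ae_restrict_mem measurableSet_Ioc] with z hzY
    exact hg.comp (h.continuousOn_q z (hz z hzY)) (h.mem z (hz z hzY))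
  · filter_upwards [ae_restrict_mem measurableSet_Ioc] with z hzY
    exact hC _ (h.mem z (hz z hzY) t ht)
  · filter_upwards [ae_restrict_mem measurableSet_Icc] with t ht
    rw [h.u_eq Y hY t ht, intervalIntegral.integral_of_le hY.1]

theorem integrableOn_state (h : IsRectSolution g Φ s z₀ r τ u q) (hg : ContinuousOn g s)
    (hC : ∀ x ∈ s, ‖g x‖ ≤ C) {Y : ℝ} (hY : Y ∈ Icc z₀ r) :
    IntegrableOn (fun t ↦ (u Y t, q Y t)) (Icc 0 τ) := by
  refine Integrable.prodMk ?_ (h.continuousOn_q Y hY).integrableOn_Icc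
  refine .of_bound (h.aestronglyMeasurable_u hg hC hY) (C * (Y - z₀)) ?_
  filter_upwards [ae_restrict_mem measurableSet_Icc] with t ht using h.norm_u_le hC hY ht

theorem integrableOn_dist_state (h₁ : IsRectSolution g Φ s z₀ r τ u₁ q₁)
    (h₂ : IsRectSolution g Φ s z₀ r τ u₂ q₂) (hg : ContinuousOn g s) (hC : ∀ x ∈ s, ‖g x‖ ≤ C)
    {Y₁ Y₂ : ℝ} (hY₁ : Y₁ ∈ Icc z₀ r) (hY₂ : Y₂ ∈ Icc z₀ r) :
    IntegrableOn (fun t ↦ dist (u₁ Y₁ t, q₁ Y₁ t) (u₂ Y₂ t, q₂ Y₂ t)) (Icc 0 τ) := by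
  simp only [dist_eq_norm]
  exact ((h₁.integrableOn_state hg hC hY₁).sub (h₂.integrableOn_state hg hC hY₂)).norm

theorem integrableOn_rhs (h : IsRectSolution g Φ s z₀ r τ u q) (hg : ContinuousOn g s)
    (hC : ∀ x ∈ s, ‖g x‖ ≤ C) (hΦ : Continuous Φ) (hΦK : LipschitzOnWith K Φ (univ ×ˢ s)) {Y : ℝ}
    (hY : Y ∈ Icc z₀ r) : IntegrableOn (fun t ↦ Φ (u Y t, q Y t)) (Icc 0 τ) := by
  have hst := h.integrableOn_state hg hC hY
  set p₀ : ℝ × (ι → ℝ) := (0, q Y 0)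
  refine Integrable.mono' ((integrable_const ‖Φ p₀‖).add
    ((hst.sub (integrable_const p₀)).norm.const_mul K))
    (hΦ.comp_aestronglyMeasurable hst.aestronglyMeasurable) ?_
  filter_upwards [ae_restrict_mem measurableSet_Icc] with t ht
  have hmem : ∀ t ∈ Icc 0 τ, q Y t ∈ s := h.mem Y hY
  have := hΦK.norm_sub_le (x := (u Y t, q Y t)) ⟨mem_univ _, hmem t ht⟩ (y := p₀)
    ⟨mem_univ _, hmem 0 ⟨le_rfl, ht.1.trans ht.2⟩⟩
  exact (norm_le_norm_add_norm_sub' _ (Φ p₀)).trans (by simpa using this)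

theorem dist_q_le_integral (h₁ : IsRectSolution g Φ s z₀ r τ u₁ q₁)
    (h₂ : IsRectSolution g Φ s z₀ r τ u₂ q₂) (hg : ContinuousOn g s) (hC : ∀ x ∈ s, ‖g x‖ ≤ C)
    (hΦ : Continuous Φ) (hΦK : LipschitzOnWith K Φ (univ ×ˢ s)) {Y₁ Y₂ T : ℝ}
    (hY₁ : Y₁ ∈ Icc z₀ r) (hY₂ : Y₂ ∈ Icc z₀ r) (hT : T ∈ Icc 0 τ) :
    dist (q₁ Y₁ T) (q₂ Y₂ T) ≤ dist (q₁ Y₁ 0) (q₂ Y₂ 0) +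
      K * ∫ t in (0 : ℝ)..T, dist (u₁ Y₁ t, q₁ Y₁ t) (u₂ Y₂ t, q₂ Y₂ t) := by
  have hsub : Icc 0 T ⊆ Icc 0 τ := Icc_subset_Icc_right hT.2
  have hint {w : ℝ → ℝ} (hw : IntegrableOn w (Icc 0 τ)) : IntervalIntegrable w volume 0 T :=
    (hw.mono_set (by rwa [uIcc_of_le hT.1])).intervalIntegrable
  have hd := (h₁.integrableOn_dist_state h₂ hg hC hY₁ hY₂)
  have hd0 : 0 ≤ ∫ t in (0 : ℝ)..T, dist (u₁ Y₁ t, q₁ Y₁ t) (u₂ Y₂ t, q₂ Y₂ t) :=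
    intervalIntegral.integral_nonneg hT.1 fun t _ ↦ dist_nonneg
  refine (dist_pi_le_iff (by positivity)).2 fun i ↦ ?_
  have hlip : ∀ t ∈ Icc 0 T, ‖Φ (u₁ Y₁ t, q₁ Y₁ t) i - Φ (u₂ Y₂ t, q₂ Y₂ t) i‖ ≤
      K * dist (u₁ Y₁ t, q₁ Y₁ t) (u₂ Y₂ t, q₂ Y₂ t) := fun t ht ↦
    (norm_le_pi_norm (Φ _ - Φ _) i).trans <| by
      rw [← dist_eq_norm]
      exact hΦK.dist_le_mul _ ⟨mem_univ _, h₁.mem _ hY₁ t (hsub ht)⟩ _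
        ⟨mem_univ _, h₂.mem _ hY₂ t (hsub ht)⟩
  have hI : ‖(∫ t in (0 : ℝ)..T, Φ (u₁ Y₁ t, q₁ Y₁ t) i) -
      ∫ t in (0 : ℝ)..T, Φ (u₂ Y₂ t, q₂ Y₂ t) i‖ ≤
      K * ∫ t in (0 : ℝ)..T, dist (u₁ Y₁ t, q₁ Y₁ t) (u₂ Y₂ t, q₂ Y₂ t) := by
    rw [← intervalIntegral.integral_sub
      (hint ((h₁.integrableOn_rhs hg hC hΦ hΦK hY₁).eval i))
      (hint ((h₂.integrableOn_rhs hg hC hΦ hΦK hY₂).eval i)),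
      ← intervalIntegral.integral_const_mul]
    refine intervalIntegral.norm_integral_le_of_norm_le hT.1 (ae_of_all _ fun t ht ↦
      hlip t (Ioc_subset_Icc_self ht)) ((hint hd).const_mul _)
  rw [h₁.q_eq _ hY₁ T hT, h₂.q_eq _ hY₂ T hT]
  exact (dist_add_add_le _ _ _ _).trans
    (add_le_add (dist_le_pi_dist _ _ i) (by rwa [dist_eq_norm]))

theorem dist_q_le (h₁ : IsRectSolution g Φ s z₀ r τ u₁ q₁)
    (h₂ : IsRectSolution g Φ s z₀ r τ u₂ q₂) (hg : ContinuousOn g s) (hC : ∀ x ∈ s, ‖g x‖ ≤ C)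
    (hΦ : Continuous Φ) (hΦK : LipschitzOnWith K Φ (univ ×ˢ s)) {Y₁ Y₂ T : ℝ}
    (hY₁ : Y₁ ∈ Icc z₀ r) (hY₂ : Y₂ ∈ Icc z₀ r) (hT : T ∈ Icc 0 τ) :
    dist (q₁ Y₁ T) (q₂ Y₂ T) ≤ (dist (q₁ Y₁ 0) (q₂ Y₂ 0) +
      K * ∫ t in (0 : ℝ)..τ, dist (u₁ Y₁ t) (u₂ Y₂ t)) * exp (K * T) := by
  have hqc : ContinuousOn (fun t ↦ dist (q₁ Y₁ t) (q₂ Y₂ t)) (Icc 0 τ) :=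
    continuous_dist.comp_continuousOn
      ((h₁.continuousOn_q _ hY₁).prodMk (h₂.continuousOn_q _ hY₂))
  have huI : IntegrableOn (fun t ↦ dist (u₁ Y₁ t) (u₂ Y₂ t)) (Icc 0 τ) := by
    simp only [dist_eq_norm]
    exact ((h₁.integrableOn_state hg hC hY₁).fst.sub (h₂.integrableOn_state hg hC hY₂).fst).norm
  refine le_mul_exp_of_le_add_mul_integral K.2 hqc (fun T hT ↦ ?_) hT
  have hint {a b : ℝ} {w : ℝ → ℝ} (ha : a ∈ Icc 0 τ) (hb : b ∈ Icc 0 τ)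
      (hw : IntegrableOn w (Icc 0 τ)) : IntervalIntegrable w volume a b :=
    (hw.mono_set (uIcc_subset_Icc ha hb)).intervalIntegrable
  have h0 : 0 ∈ Icc 0 τ := ⟨le_rfl, hT.1.trans hT.2⟩
  have hτ : τ ∈ Icc 0 τ := ⟨hT.1.trans hT.2, le_rfl⟩
  calc dist (q₁ Y₁ T) (q₂ Y₂ T)
      ≤ dist (q₁ Y₁ 0) (q₂ Y₂ 0) +
        K * ∫ t in (0 : ℝ)..T, dist (u₁ Y₁ t, q₁ Y₁ t) (u₂ Y₂ t, q₂ Y₂ t) :=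
        h₁.dist_q_le_integral h₂ hg hC hΦ hΦK hY₁ hY₂ hT
    _ ≤ dist (q₁ Y₁ 0) (q₂ Y₂ 0) +
        K * ∫ t in (0 : ℝ)..T, (dist (u₁ Y₁ t) (u₂ Y₂ t) + dist (q₁ Y₁ t) (q₂ Y₂ t)) := by
        gcongr
        exact intervalIntegral.integral_mono_on hT.1
          (hint h0 hT (h₁.integrableOn_dist_state h₂ hg hC hY₁ hY₂))
          ((hint h0 hT huI).add (hint h0 hT hqc.integrableOn_Icc))
          fun t _ ↦ max_le_add_of_nonneg dist_nonneg dist_nonneg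
    _ ≤ dist (q₁ Y₁ 0) (q₂ Y₂ 0) + K * ((∫ t in (0 : ℝ)..τ, dist (u₁ Y₁ t) (u₂ Y₂ t)) +
        ∫ t in (0 : ℝ)..T, dist (q₁ Y₁ t) (q₂ Y₂ t)) := by
        rw [intervalIntegral.integral_add (hint h0 hT huI) (hint h0 hT hqc.integrableOn_Icc)]
        gcongr
        exact intervalIntegral.integral_mono_interval le_rfl hT.1 hT.2
          (ae_of_all _ fun t ↦ dist_nonneg) (hint h0 hτ huI)
    _ = dist (q₁ Y₁ 0) (q₂ Y₂ 0) + K * (∫ t in (0 : ℝ)..τ, dist (u₁ Y₁ t) (u₂ Y₂ t)) +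
        K * ∫ t in (0 : ℝ)..T, dist (q₁ Y₁ t) (q₂ Y₂ t) := by ring

theorem tendsto_integral_dist_u (h : IsRectSolution g Φ s z₀ r τ u q) (hg : ContinuousOn g s)
    (hC : ∀ x ∈ s, ‖g x‖ ≤ C) (hτ : 0 ≤ τ) {Y₀ : ℝ} (hY₀ : Y₀ ∈ Icc z₀ r) :
    Tendsto (fun Y ↦ ∫ t in (0 : ℝ)..τ, dist (u Y t) (u Y₀ t)) (𝓝[Icc z₀ r] Y₀) (𝓝 0) := by
  have hsub : uIoc 0 τ ⊆ Icc 0 τ := by rw [uIoc_of_le hτ]; exact Ioc_subset_Icc_self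
  have hC0 : 0 ≤ C := (norm_nonneg _).trans (hC _ (h.mem Y₀ hY₀ 0 ⟨le_rfl, hτ⟩))
  have hmeas {Y : ℝ} (hY : Y ∈ Icc z₀ r) :
      AEStronglyMeasurable (u Y) (volume.restrict (uIoc 0 τ)) :=
    (h.aestronglyMeasurable_u hg hC hY).mono_set hsub
  suffices Tendsto (fun Y ↦ ∫ t in (0 : ℝ)..τ, dist (u Y t) (u Y₀ t)) (𝓝[Icc z₀ r] Y₀)
      (𝓝 (∫ _ in (0 : ℝ)..τ, (0 : ℝ))) by simpa only [intervalIntegral.integral_zero] using this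
  refine intervalIntegral.tendsto_integral_filter_of_dominated_convergence
    (fun _ ↦ 2 * (C * (r - z₀))) ?_ ?_ intervalIntegrable_const
    (ae_of_all _ fun t ht ↦ ?_)
  · filter_upwards [self_mem_nhdsWithin] with Y hY using (hmeas hY).dist (hmeas hY₀)
  · filter_upwards [self_mem_nhdsWithin] with Y hY
    refine ae_of_all _ fun t ht ↦ ?_
    have hle {Y : ℝ} (hY : Y ∈ Icc z₀ r) : ‖u Y t‖ ≤ C * (r - z₀) :=
      (h.norm_u_le hC hY (hsub ht)).trans (by gcongr; exact hY.2)
    rw [norm_of_nonneg dist_nonneg, two_mul]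
    exact (dist_le_norm_add_norm _ _).trans (add_le_add (hle hY) (hle hY₀))
  · exact tendsto_iff_dist_tendsto_zero.1 (h.continuousOn_u t (hsub ht) Y₀ hY₀)

theorem continuousOn_q_left (h : IsRectSolution g Φ s z₀ r τ u q) (hg : ContinuousOn g s)
    (hC : ∀ x ∈ s, ‖g x‖ ≤ C) (hΦ : Continuous Φ) (hΦK : LipschitzOnWith K Φ (univ ×ˢ s)) {T : ℝ}
    (hT : T ∈ Icc 0 τ) : ContinuousOn (q · T) (Icc z₀ r) := by
  intro Y₀ hY₀
  have hinit : Tendsto (fun Y ↦ dist (q Y 0) (q Y₀ 0)) (𝓝[Icc z₀ r] Y₀) (𝓝 0) :=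
    tendsto_iff_dist_tendsto_zero.1 (h.continuousOn_init Y₀ hY₀)
  have hbound := (hinit.add ((h.tendsto_integral_dist_u hg hC (hT.1.trans hT.2) hY₀).const_mul
    (K : ℝ))).mul_const (exp (K * T))
  rw [mul_zero, add_zero, zero_mul] at hbound
  refine tendsto_iff_dist_tendsto_zero.2
    (squeeze_zero' (Eventually.of_forall fun _ ↦ dist_nonneg) ?_ hbound)
  filter_upwards [self_mem_nhdsWithin] with Y hY
    using h.dist_q_le h hg hC hΦ hΦK hY hY₀ hT

theorem dist_u_le (h₁ : IsRectSolution g Φ s z₀ r τ u₁ q₁)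
    (h₂ : IsRectSolution g Φ s z₀ r τ u₂ q₂) (hg : LipschitzOnWith Λ g s)
    (hC : ∀ x ∈ s, ‖g x‖ ≤ C) (hΦ : Continuous Φ) (hΦK : LipschitzOnWith K Φ (univ ×ˢ s))
    {c T : ℝ} (hT : T ∈ Icc 0 τ) (hc : ∀ z ∈ Icc z₀ r, dist (q₁ z T) (q₂ z T) ≤ c) {Y : ℝ}
    (hY : Y ∈ Icc z₀ r) : dist (u₁ Y T) (u₂ Y T) ≤ Λ * c * (Y - z₀) := by
  have hsub : Icc z₀ Y ⊆ Icc z₀ r := Icc_subset_Icc_right hY.2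
  have hint {u : ℝ → ℝ → ℝ} {q : ℝ → ℝ → ι → ℝ} (h : IsRectSolution g Φ s z₀ r τ u q) :
      IntervalIntegrable (fun z ↦ g (q z T)) volume z₀ Y := by
    refine ContinuousOn.intervalIntegrable ?_
    rw [uIcc_of_le hY.1]
    exact (hg.continuousOn.comp (h.continuousOn_q_left hg.continuousOn hC hΦ hΦK hT)
      fun z hz ↦ h.mem z hz T hT).mono hsub
  rw [h₁.u_eq Y hY T hT, h₂.u_eq Y hY T hT, dist_eq_norm,
    ← intervalIntegral.integral_sub (hint h₁) (hint h₂), ← abs_of_nonneg (sub_nonneg.2 hY.1)]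
  refine intervalIntegral.norm_integral_le_of_norm_le_const fun z hz ↦ ?_
  rw [uIoc_of_le hY.1] at hz
  have hz' := hsub (Ioc_subset_Icc_self hz)
  rw [← dist_eq_norm]
  exact (hg.dist_le_mul _ (h₁.mem z hz' T hT) _ (h₂.mem z hz' T hT)).trans
    (by gcongr; exact hc z hz')

theorem dist_q_le_of_dist_init_le (h₁ : IsRectSolution g Φ s z₀ r τ u₁ q₁)
    (h₂ : IsRectSolution g Φ s z₀ r τ u₂ q₂) (hs : Bornology.IsBounded s)
    (hg : LipschitzOnWith Λ g s) (hC : ∀ x ∈ s, ‖g x‖ ≤ C) (hΦ : Continuous Φ)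
    (hΦK : LipschitzOnWith K Φ (univ ×ˢ s)) {ε : ℝ}
    (hε : ∀ Y ∈ Icc z₀ r, dist (q₁ Y 0) (q₂ Y 0) ≤ ε) {Y T : ℝ} (hY : Y ∈ Icc z₀ r)
    (hT : T ∈ Icc 0 τ) :
    dist (q₁ Y T) (q₂ Y T) ≤ ε * exp (K * max (Λ * (r - z₀)) 1 * T) := by
  set m : ℝ := max (Λ * (r - z₀)) 1
  have hm : 0 ≤ m := zero_le_one.trans (le_max_right _ _)
  refine le_mul_exp_of_forall_majorant (α := Icc z₀ r)
    (x := fun Y T ↦ dist (q₁ Y T) (q₂ Y T)) (mul_nonneg K.2 hm)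
    (fun Y T hT ↦ Metric.dist_le_diam_of_mem hs (h₁.mem Y Y.2 T hT) (h₂.mem Y Y.2 T hT))
    (fun b hb hqb ⟨Y, hY⟩ T hT ↦ ?_) ⟨Y, hY⟩ hT
  have hsub : Icc 0 T ⊆ Icc 0 τ := Icc_subset_Icc_right hT.2
  have hstate : ∀ t ∈ Icc 0 T, dist (u₁ Y t, q₁ Y t) (u₂ Y t, q₂ Y t) ≤ m * b t := by
    intro t ht
    have hq : ∀ z ∈ Icc z₀ r, dist (q₁ z t) (q₂ z t) ≤ b t := fun z hz ↦
      hqb ⟨z, hz⟩ t (hsub ht)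
    have hb0 : 0 ≤ b t := dist_nonneg.trans (hq Y hY)
    refine max_le ?_ ((hq Y hY).trans (le_mul_of_one_le_left hb0 (le_max_right _ _)))
    calc dist (u₁ Y t) (u₂ Y t) ≤ Λ * b t * (Y - z₀) :=
          h₁.dist_u_le h₂ hg hC hΦ hΦK (hsub ht) hq hY
      _ ≤ Λ * b t * (r - z₀) := by gcongr; exact hY.2
      _ = Λ * (r - z₀) * b t := by ring
      _ ≤ m * b t := by gcongr; exact le_max_left _ _
  calc dist (q₁ Y T) (q₂ Y T)
      ≤ dist (q₁ Y 0) (q₂ Y 0) +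
        K * ∫ t in (0 : ℝ)..T, dist (u₁ Y t, q₁ Y t) (u₂ Y t, q₂ Y t) :=
        h₁.dist_q_le_integral h₂ hg.continuousOn hC hΦ hΦK hY hY hT
    _ ≤ ε + K * ∫ t in (0 : ℝ)..T, m * b t := by
        gcongr
        · exact hε Y hY
        · refine intervalIntegral.integral_mono_on hT.1 ?_
            ((hb.const_mul m).intervalIntegrable _ _) hstate
          refine (IntegrableOn.mono_set (h₁.integrableOn_dist_state h₂ hg.continuousOn hC hY hY)
            ?_).intervalIntegrable
          rwa [uIcc_of_le hT.1]
    _ = ε + K * m * ∫ t in (0 : ℝ)..T, b t := by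
        rw [intervalIntegral.integral_const_mul, mul_assoc]

theorem tendstoUniformlyOn {κ : Type*} {l : Filter κ} {uk : κ → ℝ → ℝ → ℝ}
    {qk : κ → ℝ → ℝ → ι → ℝ} (hk : ∀ k, IsRectSolution g Φ s z₀ r τ (uk k) (qk k))
    (h : IsRectSolution g Φ s z₀ r τ u q) (hs : Bornology.IsBounded s)
    (hg : LipschitzOnWith Λ g s) (hΦ : Continuous Φ) (hΦK : LipschitzOnWith K Φ (univ ×ˢ s))
    (hinit : TendstoUniformlyOn (fun k Y ↦ qk k Y 0) (q · 0) l (Icc z₀ r)) :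
    TendstoUniformlyOn (fun k p ↦ (uk k p.1 p.2, qk k p.1 p.2)) (fun p ↦ (u p.1 p.2, q p.1 p.2)) l
      (Icc z₀ r ×ˢ Icc 0 τ) := by
  obtain ⟨C, hC⟩ := exists_forall_norm_le_of_lipschitzOnWith hs hg
  set m : ℝ := max (Λ * (r - z₀)) 1
  have hm : 0 < m := zero_lt_one.trans_le (le_max_right _ _)
  rw [Metric.tendstoUniformlyOn_iff]
  intro ε hε
  filter_upwards [Metric.tendstoUniformlyOn_iff.1 hinit (ε / (2 * m * exp (K * m * τ)))
    (by positivity)] with k hδ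
  rintro ⟨Y, T⟩ ⟨hY, hT⟩
  have hq : ∀ z ∈ Icc z₀ r, dist (q z T) (qk k z T) ≤ ε / (2 * m) := fun z hz ↦
    calc dist (q z T) (qk k z T)
        ≤ ε / (2 * m * exp (K * m * τ)) * exp (K * m * T) :=
          h.dist_q_le_of_dist_init_le (hk k) hs hg hC hΦ hΦK (fun z hz ↦ (hδ z hz).le) hz hT
      _ ≤ ε / (2 * m * exp (K * m * τ)) * exp (K * m * τ) := by gcongr; exact hT.2
      _ = ε / (2 * m) := by field_simp
  have hu : dist (u Y T) (uk k Y T) ≤ Λ * (ε / (2 * m)) * (Y - z₀) :=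
    h.dist_u_le (hk k) hg hC hΦ hΦK hT hq hY
  have hmε : m * (ε / (2 * m)) = ε / 2 := by field_simp
  refine (max_le (hu.trans ?_) ((hq Y hY).trans ?_)).trans_lt (half_lt_self hε)
  · calc Λ * (ε / (2 * m)) * (Y - z₀) ≤ Λ * (ε / (2 * m)) * (r - z₀) := by gcongr; exact hY.2
      _ = Λ * (r - z₀) * (ε / (2 * m)) := by ring
      _ ≤ m * (ε / (2 * m)) := by gcongr; exact le_max_left _ _
      _ = ε / 2 := hmε
  · rw [← hmε]
    exact le_mul_of_one_le_left (by positivity) (le_max_right _ _)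

end IsRectSolution

/-! ### The coefficients of the system -/

/-- The right-hand side of the equation for `u_Y`, with `q = (v, ξ)`. -/
noncomputable def uFlux (lam : ℝ) (q : Fin 2 → ℝ) : ℝ :=
  1 / 2 * q 1 * sin (q 0) * (cos (q 0 / 2) ^ 2) ^ (1 / (2 * lam) - 1)

/-- The right-hand sides of the equations for `(v_T, ξ_T)` without their common factor `f''(u)`,
with `q = (v, ξ)`. -/
noncomputable def source (lam : ℝ) (q : Fin 2 → ℝ) : Fin 2 → ℝ :=
  ![-2 * lam * sin (q 0 / 2) ^ 2, 1 / 2 * q 1 * sin (q 0)]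

theorem contDiff_uFlux {lam : ℝ} (hlam : 0 < lam) (hlam' : lam ≤ 1 / 2) :
    ContDiff ℝ 1 (uFlux lam) := by
  have hp : 0 ≤ 1 / (2 * lam) - 1 := by
    rw [sub_nonneg, le_div_iff₀ (by positivity)]
    linarith
  -- `(cos² (v/2))ᵖ` need not be differentiable where the cosine vanishes; `sin v` supplies the
  -- factor `cos (v/2)` that restores smoothness.
  have heq : uFlux lam = fun q ↦ q 1 * sin (q 0 / 2) *
      (cos (q 0 / 2) * (cos (q 0 / 2) ^ 2) ^ (1 / (2 * lam) - 1)) := by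
    ext q
    rw [uFlux, show q 0 = 2 * (q 0 / 2) by ring, sin_two_mul]
    ring_nf
  rw [heq]
  have hcos : ContDiff ℝ 1 fun q : Fin 2 → ℝ ↦ cos (q 0 / 2) := by fun_prop
  exact ContDiff.mul (by fun_prop) ((contDiff_mul_sq_rpow hp).comp hcos)

theorem contDiff_source {lam : ℝ} : ContDiff ℝ 1 (source lam) := by
  unfold source
  rw [contDiff_pi]
  intro i
  fin_cases i
  · exact (by fun_prop : ContDiff ℝ 1 fun q : Fin 2 → ℝ ↦ -2 * lam * sin (q 0 / 2) ^ 2)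
  · exact (by fun_prop : ContDiff ℝ 1 fun q : Fin 2 → ℝ ↦ 1 / 2 * q 1 * sin (q 0))

theorem norm_source_le {lam : ℝ} (hlam : 0 < lam) (hlam' : lam ≤ 1 / 2) (q : Fin 2 → ℝ) :
    ‖source lam q‖ ≤ ‖q‖ := by
  refine (pi_norm_le_iff_of_nonneg (norm_nonneg q)).2 fun i ↦ ?_
  have h0 : |q 0| ≤ ‖q‖ := norm_le_pi_norm q 0
  have h1 : |q 1| ≤ ‖q‖ := norm_le_pi_norm q 1
  fin_cases i
  · have hsin : |sin (q 0 / 2)| * |sin (q 0 / 2)| ≤ 1 * (|q 0| / 2) := by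
      gcongr
      · exact abs_sin_le_one _
      · simpa [abs_div] using abs_sin_le_abs (x := q 0 / 2)
    calc ‖-2 * lam * sin (q 0 / 2) ^ 2‖ = 2 * lam * (|sin (q 0 / 2)| * |sin (q 0 / 2)|) := by
          simp [abs_of_pos hlam, sq]
      _ ≤ 1 * (1 * (|q 0| / 2)) := by gcongr; linarith
      _ ≤ ‖q‖ := by linarith [abs_nonneg (q 0)]
  · calc ‖1 / 2 * q 1 * sin (q 0)‖ = |q 1| * |sin (q 0)| / 2 := by
          simp only [one_div, norm_mul, norm_inv, norm_ofNat, norm_eq_abs]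
          ring
      _ ≤ |q 1| * 1 / 2 := by gcongr; exact abs_sin_le_one _
      _ ≤ ‖q‖ := by linarith [abs_nonneg (q 1)]

theorem uFlux_of_eq_zero {lam : ℝ} {q : Fin 2 → ℝ} (hq : q 0 = 0) : uFlux lam q = 0 := by
  simp [uFlux, hq]

theorem source_of_eq_zero {lam : ℝ} {q : Fin 2 → ℝ} (hq : q 0 = 0) : source lam q = 0 := by
  ext i
  fin_cases i <;> simp [source, hq]

/-! ### Extension across the boundary ray -/

theorem T0_nonneg {a : ℝ} (ha : 0 ≤ a) (Y : ℝ) : 0 ≤ T0 a Y := by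
  unfold T0
  split_ifs with hY
  · exact le_rfl
  · exact div_nonneg (by linarith) ha

theorem T0_le_iff {a Y T τ : ℝ} (ha : 0 ≤ a) (hY : -a * τ ≤ Y) (hT : 0 ≤ T) :
    T0 a Y ≤ T ↔ -a * T ≤ Y := by
  unfold T0
  split_ifs with hY0
  · exact iff_of_true hT (by nlinarith)
  · have ha' : 0 < a := ha.lt_of_ne (by rintro rfl; linarith)
    rw [div_le_iff₀ ha']
    constructor <;> intro h <;> linarith

theorem neg_mul_T0 {a Y τ : ℝ} (hY : -a * τ ≤ Y) (hY0 : Y < 0) : -a * T0 a Y = Y := by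
  have ha : a ≠ 0 := by rintro rfl; linarith
  rw [T0, if_neg hY0.not_ge]
  field_simp

theorem le_neg_mul_of_le_T0 {a Y t τ : ℝ} (ha : 0 ≤ a) (hY : -a * τ ≤ Y) (ht : 0 < t)
    (htT : t ≤ T0 a Y) : Y ≤ -a * t := by
  have hY0 : Y < 0 := not_le.1 fun hY0 ↦ (ht.trans_le htT).ne' (if_pos hY0)
  rw [← neg_mul_T0 hY hY0]
  nlinarith

/-- The extension of a function on `Ω` to all `Y`, constant in `Y` to the left of the boundary ray
`Y = -a T`. -/
noncomputable def extendLeft (a : ℝ) (w : ℝ → ℝ → ℝ) (Y T : ℝ) : ℝ := w (max Y (-a * T)) T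

section ExtendLeft

variable {a c Y T τ : ℝ} {w : ℝ → ℝ → ℝ}

theorem extendLeft_of_ray_le (h : -a * T ≤ Y) : extendLeft a w Y T = w Y T := by
  rw [extendLeft, max_eq_left h]

theorem extendLeft_of_le_ray (h : Y ≤ -a * T) : extendLeft a w Y T = w (-a * T) T := by
  rw [extendLeft, max_eq_right h]

theorem extendLeft_eq_max_T0 (ha : 0 ≤ a) (hw : ∀ T, 0 ≤ T → w (-a * T) T = c)
    (hY : -a * τ ≤ Y) (hT : 0 ≤ T) : extendLeft a w Y T = w Y (max T (T0 a Y)) := by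
  rcases le_or_gt (T0 a Y) T with h | h
  · rw [max_eq_left h, extendLeft_of_ray_le ((T0_le_iff ha hY hT).1 h)]
  · have hYT : Y < -a * T := not_le.1 fun hle ↦ h.not_ge ((T0_le_iff ha hY hT).2 hle)
    have hY0 : Y < 0 := hYT.trans_le (by nlinarith)
    have hray := hw _ (T0_nonneg ha Y)
    rw [neg_mul_T0 hY hY0] at hray
    rw [max_eq_right h.le, hray, extendLeft_of_le_ray hYT.le, hw T hT]

theorem continuousOn_extendLeft_left {r : ℝ} (hr : -a * T ≤ r)
    (hw : ContinuousOn (w · T) (Icc (-a * T) r)) : ContinuousOn (extendLeft a w · T) (Iic r) :=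
  hw.comp (by fun_prop) fun _ hY ↦ ⟨le_max_right _ _, max_le hY hr⟩

theorem continuousOn_extendLeft_right (ha : 0 ≤ a) (hw : ∀ T, 0 ≤ T → w (-a * T) T = c)
    (hY : -a * τ ≤ Y) (hτ : 0 ≤ τ) (hc : ContinuousOn (w Y) (Icc (T0 a Y) τ)) :
    ContinuousOn (extendLeft a w Y) (Icc 0 τ) := by
  have hmax : ContinuousOn (fun T ↦ w Y (max T (T0 a Y))) (Icc 0 τ) :=
    hc.comp (by fun_prop) fun T hT ↦ ⟨le_max_right _ _, max_le hT.2 ((T0_le_iff ha hY hτ).2 hY)⟩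
  exact hmax.congr fun T hT ↦ extendLeft_eq_max_T0 ha hw hY hT.1

theorem extendLeft_eq_add_integral (ha : 0 ≤ a) (hw : ∀ T, 0 ≤ T → w (-a * T) T = c)
    (hY : -a * τ ≤ Y) {H H' : ℝ → ℝ}
    (heq : ∀ T, T0 a Y ≤ T → w Y T = w Y (T0 a Y) + ∫ t in T0 a Y..T, H t)
    (hH : ∀ t, T0 a Y ≤ t → H' t = H t) (hH0 : ∀ t, 0 ≤ t → Y ≤ -a * t → H' t = 0) (hT : 0 ≤ T) :
    extendLeft a w Y T = extendLeft a w Y 0 + ∫ t in (0 : ℝ)..T, H' t := by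
  have h0 := T0_nonneg ha Y
  rw [extendLeft_eq_max_T0 ha hw hY hT, extendLeft_eq_max_T0 ha hw hY le_rfl, max_eq_right h0,
    heq _ (le_max_right _ _), integral_eq_integral_max_of_forall_Ioc_eq_zero h0 hT fun t ht ↦
      hH0 t ht.1.le (le_neg_mul_of_le_T0 ha hY ht.1 ht.2)]
  congr 1
  refine intervalIntegral.integral_congr fun t ht ↦ (hH t ?_).symm
  rw [uIcc_of_le (le_max_right _ _)] at ht
  exact ht.1

theorem extendLeft_eq_integral {z₀ : ℝ} (hz₀ : z₀ ≤ -a * T) (hY : z₀ ≤ Y) {G G' : ℝ → ℝ}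
    (heq : ∀ Y, -a * T ≤ Y → w Y T = ∫ z in (-a * T)..Y, G z)
    (hG : ∀ z, -a * T ≤ z → G' z = G z) (hG0 : ∀ z, z ≤ -a * T → G' z = 0) :
    extendLeft a w Y T = ∫ z in z₀..Y, G' z := by
  rw [extendLeft, heq _ (le_max_right _ _),
    integral_eq_integral_max_of_forall_Ioc_eq_zero hz₀ hY fun z hz ↦ hG0 z hz.2]
  refine intervalIntegral.integral_congr fun z hz ↦ (hG z ?_).symm
  rw [uIcc_of_le (le_max_right _ _)] at hz
  exact hz.1

end ExtendLeft

/-- The state `(v, ξ)` extended beyond the boundary ray. -/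
noncomputable def extState (a : ℝ) (v ξ : ℝ → ℝ → ℝ) (Y T : ℝ) : Fin 2 → ℝ :=
  ![extendLeft a v Y T, extendLeft a ξ Y T]

theorem extState_apply_zero (a : ℝ) (v ξ : ℝ → ℝ → ℝ) (Y T : ℝ) :
    extState a v ξ Y T 0 = extendLeft a v Y T := rfl

theorem extState_apply_one (a : ℝ) (v ξ : ℝ → ℝ → ℝ) (Y T : ℝ) :
    extState a v ξ Y T 1 = extendLeft a ξ Y T := rfl

namespace IsSolSemilinear

variable {lam : ℝ} {f ubar vbar : ℝ → ℝ} {u v ξ : ℝ → ℝ → ℝ}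

theorem extState_zero (h : IsSolSemilinear lam f ubar vbar u v ξ) (Y : ℝ) :
    extState (deriv f 0) v ξ Y 0 = ![vbar (max Y 0), 1] := by
  obtain ⟨-, -, hinit, -⟩ := h
  obtain ⟨-, hv, hξ⟩ := hinit (max Y 0) (le_max_right _ _)
  rw [extState, extendLeft, extendLeft, mul_zero, hv, hξ]

theorem extState_apply_zero_of_le_ray (h : IsSolSemilinear lam f ubar vbar u v ξ) {Y T : ℝ}
    (hT : 0 ≤ T) (hY : Y ≤ -deriv f 0 * T) : extState (deriv f 0) v ξ Y T 0 = 0 := by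
  obtain ⟨-, -, -, hbdry, -⟩ := h
  rw [extState_apply_zero, extendLeft_of_le_ray hY, (hbdry T hT).2.1]

theorem continuousOn_extState (h : IsSolSemilinear lam f ubar vbar u v ξ) (ha : 0 ≤ deriv f 0)
    {Y τ : ℝ} (hτ : 0 ≤ τ) (hY : -deriv f 0 * τ ≤ Y) :
    ContinuousOn (extState (deriv f 0) v ξ Y) (Icc 0 τ) := by
  obtain ⟨-, hLip, -, hbdry, -⟩ := h
  obtain ⟨K, hv, hξ⟩ := hLip Y τ
  refine continuousOn_pi.2 fun i ↦ ?_
  fin_cases i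
  · exact continuousOn_extendLeft_right ha (fun T hT ↦ (hbdry T hT).2.1) hY hτ hv.continuousOn
  · exact continuousOn_extendLeft_right ha (fun T hT ↦ (hbdry T hT).2.2) hY hτ hξ.continuousOn

theorem extendLeft_u_eq (h : IsSolSemilinear lam f ubar vbar u v ξ) {z₀ Y T : ℝ} (hT : 0 ≤ T)
    (hz₀ : z₀ ≤ -deriv f 0 * T) (hY : z₀ ≤ Y) :
    extendLeft (deriv f 0) u Y T = ∫ z in z₀..Y, uFlux lam (extState (deriv f 0) v ξ z T) := by
  have hequ := h.2.2.2.2.1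
  refine extendLeft_eq_integral hz₀ hY
    (G := fun z ↦ 1 / 2 * ξ z T * sin (v z T) * (cos (v z T / 2) ^ 2) ^ (1 / (2 * lam) - 1))
    (fun Y hY ↦ hequ (Y, T) ⟨hT, hY⟩) (fun z hz ↦ ?_)
    fun z hz ↦ uFlux_of_eq_zero (h.extState_apply_zero_of_le_ray hT hz)
  rw [uFlux, extState_apply_zero, extState_apply_one, extendLeft_of_ray_le hz,
    extendLeft_of_ray_le hz]

theorem extState_eq (h : IsSolSemilinear lam f ubar vbar u v ξ) (ha : 0 ≤ deriv f 0)
    {Y T τ : ℝ} (hY : -deriv f 0 * τ ≤ Y) (hT : 0 ≤ T) (i : Fin 2) :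
    extState (deriv f 0) v ξ Y T i = extState (deriv f 0) v ξ Y 0 i + ∫ t in (0 : ℝ)..T,
      (deriv (deriv f) (extendLeft (deriv f 0) u Y t) •
        source lam (extState (deriv f 0) v ξ Y t)) i := by
  have ⟨_, _, _, hbdry, _, heq⟩ := h
  have hmem : ∀ t, T0 (deriv f 0) Y ≤ t → -deriv f 0 * t ≤ Y := fun t ht ↦
    (T0_le_iff ha hY ((T0_nonneg ha Y).trans ht)).1 ht
  have hΩ : ∀ t, T0 (deriv f 0) Y ≤ t → (Y, t) ∈ OmegaDom (deriv f 0) := fun t ht ↦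
    ⟨(T0_nonneg ha Y).trans ht, hmem t ht⟩
  have hzero : ∀ t, 0 ≤ t → Y ≤ -deriv f 0 * t →
      source lam (extState (deriv f 0) v ξ Y t) = 0 := fun t ht hYt ↦
    source_of_eq_zero (h.extState_apply_zero_of_le_ray ht hYt)
  fin_cases i
  · refine extendLeft_eq_add_integral ha (fun T hT ↦ (hbdry T hT).2.1) hY
      (H := fun t ↦ -2 * lam * deriv (deriv f) (u Y t) * sin (v Y t / 2) ^ 2)
      (fun T hT ↦ (heq (Y, T) (hΩ T hT)).1) (fun t ht ↦ ?_)
      (fun t ht hYt ↦ by simp [hzero t ht hYt]) hT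
    simp only [extendLeft_of_ray_le (hmem t ht), source, neg_mul, extState, Fin.isValue,
      Matrix.cons_val_zero, one_div, Matrix.cons_val_one, Matrix.cons_val_fin_one, Fin.zero_eta,
      Pi.smul_apply, smul_eq_mul, mul_neg, neg_inj]
    ring
  · refine extendLeft_eq_add_integral ha (fun T hT ↦ (hbdry T hT).2.2) hY
      (H := fun t ↦ 1 / 2 * deriv (deriv f) (u Y t) * ξ Y t * sin (v Y t))
      (fun T hT ↦ (heq (Y, T) (hΩ T hT)).2) (fun t ht ↦ ?_)
      (fun t ht hYt ↦ by simp [hzero t ht hYt]) hT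
    simp only [extendLeft_of_ray_le (hmem t ht), source, neg_mul, extState, Fin.isValue,
      Matrix.cons_val_zero, one_div, Matrix.cons_val_one, Matrix.cons_val_fin_one, Fin.mk_one,
      Pi.smul_apply, smul_eq_mul]
    ring

theorem norm_extState_le (h : IsSolSemilinear lam f ubar vbar u v ξ) (hlam : 0 < lam)
    (hlam' : lam ≤ 1 / 2) (ha : 0 ≤ deriv f 0) {M R : ℝ} (hM : ∀ x, ‖deriv (deriv f) x‖ ≤ M)
    (hR : 1 ≤ R) (hv : ∀ Y, 0 ≤ Y → |vbar Y| ≤ R) {Y T τ : ℝ} (hY : -deriv f 0 * τ ≤ Y)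
    (hT : T ∈ Icc 0 τ) : ‖extState (deriv f 0) v ξ Y T‖ ≤ R * exp (M * τ) := by
  have hM0 : 0 ≤ M := (norm_nonneg _).trans (hM 0)
  have hinit : ‖extState (deriv f 0) v ξ Y 0‖ ≤ R := by
    rw [h.extState_zero, pi_norm_le_iff_of_nonneg (by linarith)]
    intro i
    fin_cases i
    · exact hv _ (le_max_right _ _)
    · simpa using hR
  calc ‖extState (deriv f 0) v ξ Y T‖
      ≤ ‖extState (deriv f 0) v ξ Y 0‖ * exp (M * T) := by
        refine norm_le_mul_exp_of_eq_add_integral hM0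
          (h.continuousOn_extState ha (hT.1.trans hT.2) hY) (fun t _ ↦ ?_)
          (fun T hT ↦ h.extState_eq ha hY hT.1) hT
        rw [norm_smul]
        gcongr
        · exact hM _
        · exact norm_source_le hlam hlam' _
    _ ≤ R * exp (M * τ) := by gcongr; exact hT.2

theorem isRectSolution (h : IsSolSemilinear lam f ubar vbar u v ξ) (hlam : 0 < lam)
    (hlam' : lam ≤ 1 / 2) (ha : 0 ≤ deriv f 0) {M R : ℝ} (hM : ∀ x, ‖deriv (deriv f) x‖ ≤ M)
    (hR : 1 ≤ R) (hv : ∀ Y, 0 ≤ Y → |vbar Y| ≤ R) (hvc : ContinuousOn vbar (Ici 0)) {r τ : ℝ}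
    (hr : 0 ≤ r) :
    IsRectSolution (uFlux lam) (fun p ↦ deriv (deriv f) p.1 • source lam p.2)
      (Metric.closedBall 0 (R * exp (M * τ))) (-deriv f 0 * τ) r τ
      (extendLeft (deriv f 0) u) (extState (deriv f 0) v ξ) where
  continuousOn_init := by
    simp only [h.extState_zero]
    have hmax : Continuous fun Y ↦ vbar (max Y 0) :=
      hvc.comp_continuous (by fun_prop) fun Y ↦ le_max_right Y 0
    refine continuousOn_pi.2 fun i ↦ ?_
    fin_cases i
    · exact hmax.continuousOn
    · exact continuousOn_const
  continuousOn_u T hT := by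
    obtain ⟨K, hK⟩ := h.1 T hT.1 r
    have hray : -deriv f 0 * T ≤ r := by nlinarith [hT.1]
    exact (continuousOn_extendLeft_left hray hK.continuousOn).mono fun Y hY ↦ hY.2
  continuousOn_q Y hY := by
    rcases le_or_gt 0 τ with hτ | hτ
    · exact h.continuousOn_extState ha hτ hY.1
    · simp [Icc_eq_empty hτ.not_ge]
  mem Y hY T hT := by
    simpa using h.norm_extState_le hlam hlam' ha hM hR hv hY.1 hT
  u_eq Y hY T hT := h.extendLeft_u_eq hT.1 (by nlinarith [hT.2]) hY.1
  q_eq Y hY T hT := h.extState_eq ha hY.1 hT.1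

end IsSolSemilinear

/-! ### The energy coordinate -/

section EnergyCoord

variable {lam : ℝ} {w : ℝ → ℝ}

theorem Yfun_zero (lam : ℝ) (w : ℝ → ℝ) : Yfun lam w 0 = 0 := intervalIntegral.integral_same

theorem continuous_Yfun (lam : ℝ) (hw : Continuous (deriv w)) : Continuous (Yfun lam w) :=
  intervalIntegral.continuous_primitive
    (fun _ _ ↦ ((continuous_one_add_sq_rpow _).comp hw).intervalIntegrable _ _) 0

theorem sub_le_Yfun_sub (hlam : 0 < lam) (hw : Continuous (deriv w)) {x y : ℝ} (hxy : x ≤ y) :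
    y - x ≤ Yfun lam w y - Yfun lam w x := by
  have hcont := (continuous_one_add_sq_rpow (1 / (2 * lam))).comp hw
  calc y - x = ∫ _ in x..y, (1 : ℝ) := by rw [integral_one]
    _ ≤ ∫ s in x..y, (1 + deriv w s ^ 2) ^ (1 / (2 * lam)) :=
        intervalIntegral.integral_mono_on hxy intervalIntegrable_const
          (hcont.intervalIntegrable x y) fun s _ ↦
          one_le_rpow (by linarith [sq_nonneg (deriv w s)]) (by positivity)
    _ = Yfun lam w y - Yfun lam w x :=
        (intervalIntegral.integral_interval_sub_left (hcont.intervalIntegrable 0 y)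
          (hcont.intervalIntegrable 0 x)).symm

theorem strictMono_Yfun (hlam : 0 < lam) (hw : Continuous (deriv w)) : StrictMono (Yfun lam w) :=
  fun _ _ hxy ↦ sub_pos.1 ((sub_pos.2 hxy).trans_le (sub_le_Yfun_sub hlam hw hxy.le))

theorem antilipschitzWith_Yfun (hlam : 0 < lam) (hw : Continuous (deriv w)) :
    AntilipschitzWith 1 (Yfun lam w) := by
  refine AntilipschitzWith.of_le_mul_dist fun x y ↦ ?_
  wlog hxy : x ≤ y generalizing x y
  · simpa only [dist_comm] using this y x (le_of_not_ge hxy)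
  rw [dist_comm, dist_comm (Yfun lam w x), dist_eq, dist_eq, abs_of_nonneg (sub_nonneg.2 hxy),
    NNReal.coe_one, one_mul]
  exact (sub_le_Yfun_sub hlam hw hxy).trans (le_abs_self _)

theorem surjective_Yfun (hlam : 0 < lam) (hw : Continuous (deriv w)) :
    Function.Surjective (Yfun lam w) := by
  refine (continuous_Yfun lam hw).surjective (tendsto_atTop_mono' _ ?_ tendsto_id)
    (tendsto_atBot_mono' _ ?_ tendsto_id)
  · filter_upwards [eventually_ge_atTop 0] with x hx
    simpa [Yfun_zero] using sub_le_Yfun_sub hlam hw hx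
  · filter_upwards [eventually_le_atBot 0] with x hx
    simpa [Yfun_zero] using sub_le_Yfun_sub hlam hw hx

/-- The coordinate change `x ↦ Y(x)` as an order isomorphism of the whole line; its inverse is the
paper's `x(·)` on `[0, ∞)`. -/
noncomputable def energyCoord (hlam : 0 < lam) (hw : Continuous (deriv w)) : ℝ ≃o ℝ :=
  (strictMono_Yfun hlam hw).orderIsoOfSurjective _ (surjective_Yfun hlam hw)

theorem Yfun_energyCoord_symm (hlam : 0 < lam) (hw : Continuous (deriv w)) (Y : ℝ) :
    Yfun lam w ((energyCoord hlam hw).symm Y) = Y :=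
  (energyCoord hlam hw).apply_symm_apply Y

theorem mapsTo_energyCoord_symm (hlam : 0 < lam) (hw : Continuous (deriv w)) (r : ℝ) :
    MapsTo (energyCoord hlam hw).symm (Icc 0 r) (Icc 0 r) := by
  intro Y hY
  have h0 : 0 ≤ (energyCoord hlam hw).symm Y :=
    (OrderIso.le_symm_apply _).2 ((Yfun_zero lam w).le.trans hY.1)
  refine ⟨h0, le_trans ?_ hY.2⟩
  simpa [Yfun_zero, Yfun_energyCoord_symm] using sub_le_Yfun_sub hlam hw h0

variable {κ : Type*} {l : Filter κ} {wk : κ → ℝ → ℝ} {r : ℝ}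

theorem tendstoUniformlyOn_Yfun (lam : ℝ) (hwk : ∀ k, Continuous (deriv (wk k)))
    (hw : Continuous (deriv w))
    (h : TendstoUniformlyOn (fun k ↦ deriv (wk k)) (deriv w) l (Icc 0 r)) :
    TendstoUniformlyOn (fun k ↦ Yfun lam (wk k)) (Yfun lam w) l (Icc 0 r) := by
  have hdens := continuous_one_add_sq_rpow (1 / (2 * lam))
  exact tendstoUniformlyOn_intervalIntegral (fun k ↦ (hdens.comp (hwk k)).continuousOn)
    (hdens.comp hw).continuousOn
    (tendstoUniformlyOn_comp_of_continuous hdens isCompact_Icc h hw.continuousOn)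

theorem tendstoUniformlyOn_energyCoord_symm (hlam : 0 < lam)
    (hwk : ∀ k, Continuous (deriv (wk k))) (hw : Continuous (deriv w))
    (h : TendstoUniformlyOn (fun k ↦ deriv (wk k)) (deriv w) l (Icc 0 r)) :
    TendstoUniformlyOn (fun k ↦ (energyCoord hlam (hwk k)).symm) (energyCoord hlam hw).symm l
      (Icc 0 r) :=
  tendstoUniformlyOn_of_antilipschitzWith (fun k ↦ antilipschitzWith_Yfun hlam (hwk k))
    (tendstoUniformlyOn_Yfun lam hwk hw h) (fun k Y _ ↦ Yfun_energyCoord_symm hlam (hwk k) Y)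
    (fun Y _ ↦ Yfun_energyCoord_symm hlam hw Y) (mapsTo_energyCoord_symm hlam hw r)

end EnergyCoord

namespace DataOf

variable {lam : ℝ} {w ubar vbar : ℝ → ℝ}

theorem vbar_eq (h : DataOf lam w ubar vbar) (hlam : 0 < lam) (hw : Continuous (deriv w)) {Y : ℝ}
    (hY : 0 ≤ Y) : vbar Y = 2 * arctan (deriv w ((energyCoord hlam hw).symm Y)) := by
  have hX := mapsTo_energyCoord_symm hlam hw Y ⟨hY, le_rfl⟩
  simpa only [Yfun_energyCoord_symm] using (h _ hX.1).2

theorem continuousOn_vbar (h : DataOf lam w ubar vbar) (hlam : 0 < lam)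
    (hw : Continuous (deriv w)) : ContinuousOn vbar (Ici 0) :=
  (continuous_const.mul (continuous_arctan.comp
    (hw.comp (energyCoord hlam hw).symm.continuous))).continuousOn.congr
    fun _ hY ↦ h.vbar_eq hlam hw hY

theorem abs_vbar_le (h : DataOf lam w ubar vbar) (hlam : 0 < lam) (hw : Continuous (deriv w))
    {Y : ℝ} (hY : 0 ≤ Y) : |vbar Y| ≤ π := by
  rw [h.vbar_eq hlam hw hY, abs_le]
  constructor <;> linarith [neg_pi_div_two_lt_arctan (deriv w ((energyCoord hlam hw).symm Y)),
    arctan_lt_pi_div_two (deriv w ((energyCoord hlam hw).symm Y))]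

theorem tendstoUniformlyOn_vbar {κ : Type*} {l : Filter κ} {wk ubark vbark : κ → ℝ → ℝ} {r : ℝ}
    (hk : ∀ k, DataOf lam (wk k) (ubark k) (vbark k)) (h : DataOf lam w ubar vbar)
    (hlam : 0 < lam) (hwk : ∀ k, Continuous (deriv (wk k))) (hw : Continuous (deriv w))
    (hconv : TendstoUniformlyOn (fun k ↦ deriv (wk k)) (deriv w) l (Icc 0 r)) :
    TendstoUniformlyOn vbark vbar l (Icc 0 r) := by
  have hX := (energyCoord hlam hw).symm.continuous
  have hderiv : TendstoUniformlyOn (fun k Y ↦ deriv (wk k) ((energyCoord hlam (hwk k)).symm Y))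
      (fun Y ↦ deriv w ((energyCoord hlam hw).symm Y)) l (Icc 0 r) :=
    (tendstoLocallyUniformlyOn_iff_tendstoUniformlyOn_of_compact isCompact_Icc).1
      (tendstoLocallyUniformlyOn_comp hconv.tendstoLocallyUniformlyOn hw.continuousOn
        (tendstoUniformlyOn_energyCoord_symm hlam hwk hw hconv).tendstoLocallyUniformlyOn
        hX.continuousOn (fun k ↦ mapsTo_energyCoord_symm hlam (hwk k) r)
        (mapsTo_energyCoord_symm hlam hw r))
  have harctan := tendstoUniformlyOn_comp_of_continuous
    ((continuous_const_mul 2).comp continuous_arctan) isCompact_Icc hderiv (hw.comp hX).continuousOn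
  have hvbark : ∀ k, EqOn _ (vbark k) (Icc 0 r) := fun k Y hY ↦
    ((hk k).vbar_eq hlam (hwk k) hY.1).symm
  exact (harctan.congr (.of_forall hvbark)).congr_right fun Y hY ↦ (h.vbar_eq hlam hw hY.1).symm

end DataOf

/-! ### Stability -/

theorem exists_lipschitzOnWith_smul_source {lam : ℝ} {F : ℝ → ℝ} {L M : ℝ} {ρ : ℝ}
    (hlam : 0 < lam) (hlam' : lam ≤ 1 / 2) (hF : ∀ x y, |F x - F y| ≤ L * |x - y|)
    (hM : ∀ x, ‖F x‖ ≤ M) : ∃ K, LipschitzOnWith K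
      (fun p : ℝ × (Fin 2 → ℝ) ↦ F p.1 • source lam p.2) (univ ×ˢ Metric.closedBall 0 ρ) := by
  obtain ⟨K, hK⟩ := (contDiff_source (lam := lam)).locallyLipschitz.locallyLipschitzOn
    |>.exists_lipschitzOnWith_of_compact (isCompact_closedBall (0 : Fin 2 → ℝ) ρ)
  exact ⟨_, lipschitzOnWith_smul_prod (M := M.toNNReal) (C := ρ.toNNReal)
    (LipschitzWith.of_dist_le' hF) (fun x ↦ (hM x).trans (le_coe_toNNReal M)) hK fun q hq ↦
    (norm_source_le hlam hlam' q).trans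
      ((mem_closedBall_zero_iff.1 hq).trans (le_coe_toNNReal ρ))⟩

namespace IsSolSemilinear

variable {κ : Type*} {l : Filter κ} {lam : ℝ} {f ubar vbar : ℝ → ℝ} {u v ξ : ℝ → ℝ → ℝ}
  {ubark vbark : κ → ℝ → ℝ} {uk vk ξk : κ → ℝ → ℝ → ℝ} {r : ℝ}

theorem tendstoUniformlyOn_extState_zero
    (hk : ∀ k, IsSolSemilinear lam f (ubark k) (vbark k) (uk k) (vk k) (ξk k))
    (h : IsSolSemilinear lam f ubar vbar u v ξ) (hr : 0 ≤ r)
    (hconv : TendstoUniformlyOn vbark vbar l (Icc 0 r)) (z₀ : ℝ) :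
    TendstoUniformlyOn (fun k Y ↦ extState (deriv f 0) (vk k) (ξk k) Y 0)
      (extState (deriv f 0) v ξ · 0) l (Icc z₀ r) := by
  simp only [(hk _).extState_zero, h.extState_zero]
  have hmax : TendstoUniformlyOn (fun k Y ↦ vbark k (max Y 0)) (fun Y ↦ vbar (max Y 0)) l
      (Icc z₀ r) :=
    (hconv.comp fun Y ↦ max Y 0).mono fun Y hY ↦ ⟨le_max_right _ _, max_le hY.2 hr⟩
  rw [Metric.tendstoUniformlyOn_iff] at hmax ⊢
  intro ε hε
  filter_upwards [hmax ε hε] with k hδ Y hY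
  refine (dist_pi_lt_iff hε).2 fun i ↦ ?_
  fin_cases i
  · exact hδ Y hY
  · simpa using hε

theorem tendstoUniformlyOn_rect
    (hk : ∀ k, IsSolSemilinear lam f (ubark k) (vbark k) (uk k) (vk k) (ξk k))
    (h : IsSolSemilinear lam f ubar vbar u v ξ) (hlam : 0 < lam) (hlam' : lam ≤ 1 / 2)
    (hf : Continuous (deriv (deriv f))) (ha : 0 ≤ deriv f 0) {L M R : ℝ}
    (hL : ∀ x y, |deriv (deriv f) x - deriv (deriv f) y| ≤ L * |x - y|)
    (hM : ∀ x, ‖deriv (deriv f) x‖ ≤ M) (hR : 1 ≤ R)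
    (hvk : ∀ k Y, 0 ≤ Y → |vbark k Y| ≤ R) (hv : ∀ Y, 0 ≤ Y → |vbar Y| ≤ R)
    (hvck : ∀ k, ContinuousOn (vbark k) (Ici 0)) (hvc : ContinuousOn vbar (Ici 0))
    (hr : 0 ≤ r) (hconv : TendstoUniformlyOn vbark vbar l (Icc 0 r)) (τ : ℝ) :
    TendstoUniformlyOn
      (fun k p ↦ (extendLeft (deriv f 0) (uk k) p.1 p.2,
        extState (deriv f 0) (vk k) (ξk k) p.1 p.2))
      (fun p ↦ (extendLeft (deriv f 0) u p.1 p.2, extState (deriv f 0) v ξ p.1 p.2)) l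
      (Icc (-deriv f 0 * τ) r ×ˢ Icc 0 τ) := by
  obtain ⟨Λ, hΛ⟩ := (contDiff_uFlux hlam hlam').locallyLipschitz.locallyLipschitzOn
    |>.exists_lipschitzOnWith_of_compact (isCompact_closedBall 0 (R * exp (M * τ)))
  obtain ⟨K, hK⟩ := exists_lipschitzOnWith_smul_source hlam hlam' hL hM
  exact IsRectSolution.tendstoUniformlyOn
    (fun k ↦ (hk k).isRectSolution hlam hlam' ha hM hR (hvk k) (hvck k) hr)
    (h.isRectSolution hlam hlam' ha hM hR hv hvc hr) Metric.isBounded_closedBall hΛ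
    ((hf.comp continuous_fst).smul (contDiff_source.continuous.comp continuous_snd)) hK
    (tendstoUniformlyOn_extState_zero hk h hr hconv _)

end IsSolSemilinear

theorem exists_nonneg_subset_rect {a : ℝ} (ha : 0 ≤ a) {S : Set (ℝ × ℝ)} (hS : S ⊆ OmegaDom a)
    (hbdd : Bornology.IsBounded S) : ∃ r, 0 ≤ r ∧ S ⊆ Icc (-a * r) r ×ˢ Icc 0 r := by
  obtain ⟨r, hr, hball⟩ := hbdd.subset_closedBall_lt 0 0
  refine ⟨r, hr.le, fun p hp ↦ ?_⟩
  have hnorm : ‖p‖ ≤ r := mem_closedBall_zero_iff.1 (hball hp)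
  have h1 : p.1 ≤ r := (le_abs_self _).trans ((norm_fst_le p).trans hnorm)
  have h2 : p.2 ≤ r := (le_abs_self _).trans ((norm_snd_le p).trans hnorm)
  exact ⟨⟨by nlinarith [(hS hp).2], h1⟩, (hS hp).1, h2⟩

theorem tendstoUniformlyOn_of_extend {κ : Type*} {l : Filter κ} {a : ℝ} {uk vk ξk : κ → ℝ → ℝ → ℝ}
    {u v ξ : ℝ → ℝ → ℝ} {S : Set (ℝ × ℝ)} (hS : S ⊆ OmegaDom a)
    (h : TendstoUniformlyOn
      (fun k p ↦ (extendLeft a (uk k) p.1 p.2, extState a (vk k) (ξk k) p.1 p.2))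
      (fun p ↦ (extendLeft a u p.1 p.2, extState a v ξ p.1 p.2)) l S) :
    TendstoUniformlyOn (fun k p ↦ uk k p.1 p.2) (fun p ↦ u p.1 p.2) l S ∧
    TendstoUniformlyOn (fun k p ↦ vk k p.1 p.2) (fun p ↦ v p.1 p.2) l S ∧
    TendstoUniformlyOn (fun k p ↦ ξk k p.1 p.2) (fun p ↦ ξ p.1 p.2) l S := by
  have hrestrict {wk : κ → ℝ → ℝ → ℝ} {w : ℝ → ℝ → ℝ}
      (hw : TendstoUniformlyOn (fun k p ↦ extendLeft a (wk k) p.1 p.2)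
        (fun p ↦ extendLeft a w p.1 p.2) l S) :
      TendstoUniformlyOn (fun k p ↦ wk k p.1 p.2) (fun p ↦ w p.1 p.2) l S :=
    (hw.congr (.of_forall fun _ _ hp ↦ extendLeft_of_ray_le (hS hp).2)).congr_right
      fun _ hp ↦ extendLeft_of_ray_le (hS hp).2
  have hstate := uniformContinuous_snd.comp_tendstoUniformlyOn h
  exact ⟨hrestrict (uniformContinuous_fst.comp_tendstoUniformlyOn h),
    hrestrict ((Pi.uniformContinuous_proj _ 0).comp_tendstoUniformlyOn hstate),
    hrestrict ((Pi.uniformContinuous_proj _ 1).comp_tendstoUniformlyOn hstate)⟩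

theorem stmt3_general {κ : Type*} {l : Filter κ} {lam : ℝ} (hlam : 0 < lam ∧ lam ≤ 1 / 2)
    {f : ℝ → ℝ} (hf : ContDiff ℝ 2 f) (hf0 : 0 ≤ deriv f 0)
    (hfLip : ∃ L : ℝ, ∀ a b : ℝ, |deriv (deriv f) a - deriv (deriv f) b| ≤ L * |a - b|)
    (hfbd : ∃ M : ℝ, ∀ a : ℝ, |deriv (deriv f) a| ≤ M)
    {w₀ ubar vbar : ℝ → ℝ} (hw₀ : ContDiff ℝ 1 w₀) (hdata : DataOf lam w₀ ubar vbar)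
    {u v ξ : ℝ → ℝ → ℝ} (hsol : IsSolSemilinear lam f ubar vbar u v ξ)
    {w₀k ubark vbark : κ → ℝ → ℝ} (hw₀k : ∀ k, ContDiff ℝ 1 (w₀k k))
    (hdatak : ∀ k, DataOf lam (w₀k k) (ubark k) (vbark k))
    {uk vk ξk : κ → ℝ → ℝ → ℝ}
    (hsolk : ∀ k, IsSolSemilinear lam f (ubark k) (vbark k) (uk k) (vk k) (ξk k))
    (hconv : ∀ r, TendstoUniformlyOn (fun k ↦ deriv (w₀k k)) (deriv w₀) l (Icc 0 r))
    {S : Set (ℝ × ℝ)} (hS : S ⊆ OmegaDom (deriv f 0)) (hbdd : Bornology.IsBounded S) :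
    TendstoUniformlyOn (fun k p ↦ uk k p.1 p.2) (fun p ↦ u p.1 p.2) l S ∧
    TendstoUniformlyOn (fun k p ↦ vk k p.1 p.2) (fun p ↦ v p.1 p.2) l S ∧
    TendstoUniformlyOn (fun k p ↦ ξk k p.1 p.2) (fun p ↦ ξ p.1 p.2) l S := by
  obtain ⟨L, hL⟩ := hfLip
  obtain ⟨M, hM⟩ := hfbd
  obtain ⟨r, hr, hSr⟩ := exists_nonneg_subset_rect hf0 hS hbdd
  have hderiv := hw₀.continuous_deriv_one
  have hderivk := fun k ↦ (hw₀k k).continuous_deriv_one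
  have hvbar : TendstoUniformlyOn vbark vbar l (Icc 0 r) :=
    DataOf.tendstoUniformlyOn_vbar hdatak hdata hlam.1 hderivk hderiv (hconv r)
  have hrect := IsSolSemilinear.tendstoUniformlyOn_rect hsolk hsol hlam.1 hlam.2
    (hf.iterate_deriv' 0 2).continuous hf0 hL hM (one_le_two.trans two_le_pi)
    (fun k _ ↦ (hdatak k).abs_vbar_le hlam.1 (hderivk k))
    (fun _ ↦ hdata.abs_vbar_le hlam.1 hderiv)
    (fun k ↦ (hdatak k).continuousOn_vbar hlam.1 (hderivk k))
    (hdata.continuousOn_vbar hlam.1 hderiv) hr hvbar r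
  exact tendstoUniformlyOn_of_extend hS (hrect.mono hSr)

/-- stability: if `C¹` data `w₀ᵏ` converge to `w₀` together with
their derivatives, uniformly on bounded subsets of `[0,∞)`, then the
corresponding solutions of the semi-linear system converge uniformly on every
bounded subset of `Ω`. -/
theorem stmt3 (lam : ℝ) (hlam : 0 < lam ∧ lam ≤ 1/2)
    (f : ℝ → ℝ) (hf : ContDiff ℝ 2 f) (hf0 : 0 ≤ deriv f 0)
    (hfLip : ∃ L : ℝ, ∀ a b : ℝ, |deriv (deriv f) a - deriv (deriv f) b| ≤ L * |a - b|)
    (hfbd : ∃ M : ℝ, ∀ a : ℝ, |deriv (deriv f) a| ≤ M)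
    -- the limit datum and its solution
    (w₀ : ℝ → ℝ) (hw₀ : ContDiff ℝ 1 w₀) (hw₀0 : w₀ 0 = 0) (hw₀'0 : deriv w₀ 0 = 0)
    (ubar vbar : ℝ → ℝ) (hdata : DataOf lam w₀ ubar vbar)
    (u v ξ : ℝ → ℝ → ℝ) (hsol : IsSolSemilinear lam f ubar vbar u v ξ)
    -- the approximating data and their solutions
    (w₀k : ℕ → ℝ → ℝ) (hw₀k : ∀ k, ContDiff ℝ 1 (w₀k k))
    (hw₀k0 : ∀ k, w₀k k 0 = 0) (hw₀k'0 : ∀ k, deriv (w₀k k) 0 = 0)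
    (ubark vbark : ℕ → ℝ → ℝ) (hdatak : ∀ k, DataOf lam (w₀k k) (ubark k) (vbark k))
    (uk vk ξk : ℕ → ℝ → ℝ → ℝ)
    (hsolk : ∀ k, IsSolSemilinear lam f (ubark k) (vbark k) (uk k) (vk k) (ξk k))
    -- uniform convergence of the data on bounded subsets of [0,∞)
    (hconv : ∀ S : Set ℝ, S ⊆ Ici 0 → Bornology.IsBounded S →
      TendstoUniformlyOn (fun k x => w₀k k x) w₀ atTop S ∧
      TendstoUniformlyOn (fun k x => deriv (w₀k k) x) (deriv w₀) atTop S) :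
    -- uniform convergence of the solutions on bounded subsets of Ω
    ∀ S : Set (ℝ × ℝ), S ⊆ OmegaDom (deriv f 0) → Bornology.IsBounded S →
      TendstoUniformlyOn (fun k p => uk k p.1 p.2) (fun p => u p.1 p.2) atTop S ∧
      TendstoUniformlyOn (fun k p => vk k p.1 p.2) (fun p => v p.1 p.2) atTop S ∧
      TendstoUniformlyOn (fun k p => ξk k p.1 p.2) (fun p => ξ p.1 p.2) atTop S := by
  exact fun S hS hbdd ↦ stmt3_general hlam hf hf0 hfLip hfbd hw₀ hdata hsol hw₀k hdatak hsolk
    (fun r ↦ (hconv _ Icc_subset_Ici_self (Metric.isBounded_Icc 0 r)).2) hS hbdd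
end

section
/- Let λ ∈ (0, 1/2], let f : ℝ → ℝ be C², and let u be a C² function on an open subset of ℝ² (with coordinates (x,t)) satisfying equation (E1): u_{tx} + f'(u) u_{xx} + λ f''(u) (u_x)² = 0. Then the energy law ∂_t(|u_x|^{1/λ}) + ∂_x( f'(u) |u_x|^{1/λ} ) = 0 holds pointwise; in particular the function |u_x|^{1/λ} (which is C¹ since 1/λ ≥ 2 and u_x is C¹) satisfies this conservation law. -/
/-!
Let `a = f'` and let `η` be any differentiable function. By the chain rule and the symmetry
`u_{xt} = u_{tx}`, the left side of the conservation law for the density `η(u_x)` with flux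
`a(u) η(u_x)` is `η'(u_x) (u_{tx} + a(u) u_{xx}) + a'(u) u_x η(u_x)`. Equation (E1) turns the
bracket into `-λ a'(u) u_x²`, so the law holds as soon as `λ η'(r) r² = r η(r)`. This is Euler's
identity for functions homogeneous of degree `1/λ`, which `|r|^{1/λ}` satisfies; that function is
`C¹` once `1/λ > 1`.
-/

open Real

/-- Partial derivative in the spatial direction `x` (first coordinate). -/
noncomputable def px (φ : ℝ × ℝ → ℝ) (p : ℝ × ℝ) : ℝ := fderiv ℝ φ p (1, 0)

/-- Partial derivative in the time direction `t` (second coordinate). -/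
noncomputable def pt (φ : ℝ × ℝ → ℝ) (p : ℝ × ℝ) : ℝ := fderiv ℝ φ p (0, 1)

section DirectionalDerivative

variable {E F : Type*} [NormedAddCommGroup E] [NormedSpace ℝ E]
  [NormedAddCommGroup F] [NormedSpace ℝ F]

/-- The derivative of `φ` at `p` in the fixed direction `v`, as a function of `p`, so that it can be
iterated like a partial derivative. It is read off the Fréchet derivative (hence is `0` where `φ` is
not differentiable), which makes `px` and `pt` the cases `v = (1, 0)` and `v = (0, 1)` by
definition. -/
noncomputable def dirDeriv (v : E) (φ : E → F) (p : E) : F := fderiv ℝ φ p v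

theorem contDiffAt_dirDeriv {m n : WithTop ℕ∞} {φ : E → F} {p : E} (hφ : ContDiffAt ℝ n φ p)
    (hmn : m + 1 ≤ n) (v : E) : ContDiffAt ℝ m (dirDeriv v φ) p :=
  (hφ.fderiv_right hmn).clm_apply contDiffAt_const

theorem dirDeriv_dirDeriv {φ : E → F} {p : E} (hφ : ContDiffAt ℝ 2 φ p) (v w : E) :
    dirDeriv v (dirDeriv w φ) p = fderiv ℝ (fderiv ℝ φ) p v w := by
  have hfderiv : DifferentiableAt ℝ (fderiv ℝ φ) p :=
    (hφ.fderiv_right (m := 1) one_add_one_eq_two.le).differentiableAt one_ne_zero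
  change fderiv ℝ (fun q => fderiv ℝ φ q w) p v = _
  simp [fderiv_clm_apply hfderiv (differentiableAt_const w)]

theorem dirDeriv_comm {φ : E → F} {p : E} (hφ : ContDiffAt ℝ 2 φ p) (v w : E) :
    dirDeriv v (dirDeriv w φ) p = dirDeriv w (dirDeriv v φ) p := by
  rw [dirDeriv_dirDeriv hφ, dirDeriv_dirDeriv hφ]
  exact hφ.isSymmSndFDerivAt (by simp) v w

theorem dirDeriv_comp {g : ℝ → ℝ} {g' : ℝ} {φ : E → ℝ} {p : E} (hg : HasDerivAt g g' (φ p))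
    (hφ : DifferentiableAt ℝ φ p) (v : E) :
    dirDeriv v (fun q => g (φ q)) p = g' * dirDeriv v φ p :=
  congrArg (· v) (hg.comp_hasFDerivAt p hφ.hasFDerivAt).fderiv

theorem dirDeriv_mul {φ ψ : E → ℝ} {p : E} (hφ : DifferentiableAt ℝ φ p)
    (hψ : DifferentiableAt ℝ ψ p) (v : E) :
    dirDeriv v (fun q => φ q * ψ q) p = φ p * dirDeriv v ψ p + ψ p * dirDeriv v φ p :=
  congrArg (· v) (fderiv_fun_mul hφ hψ)

end DirectionalDerivative

theorem abs_rpow_sub_two_mul_sq {α : ℝ} (hα : α ≠ 0) (r : ℝ) :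
    |r| ^ (α - 2) * r ^ 2 = |r| ^ α := by
  rcases eq_or_ne r 0 with rfl | hr
  · simp [Real.zero_rpow hα]
  · rw [← sq_abs r, ← Real.rpow_two, ← Real.rpow_add (abs_pos.mpr hr), sub_add_cancel]

section ConservationLaw

variable {E : Type*} [NormedAddCommGroup E] [NormedSpace ℝ E]

theorem dirDeriv_density_add_dirDeriv_flux {a η : ℝ → ℝ} {a' η' : ℝ} {u : E → ℝ} {p x : E}
    (hu : ContDiffAt ℝ 2 u p) (ha : HasDerivAt a a' (u p))
    (hη : HasDerivAt η η' (dirDeriv x u p)) (t : E) :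
    dirDeriv t (fun q => η (dirDeriv x u q)) p
        + dirDeriv x (fun q => a (u q) * η (dirDeriv x u q)) p
      = η' * (dirDeriv x (dirDeriv t u) p + a (u p) * dirDeriv x (dirDeriv x u) p)
        + a' * dirDeriv x u p * η (dirDeriv x u p) := by
  have hu_diff : DifferentiableAt ℝ u p := hu.differentiableAt two_ne_zero
  have hux_diff : DifferentiableAt ℝ (dirDeriv x u) p :=
    (contDiffAt_dirDeriv hu one_add_one_eq_two.le x).differentiableAt one_ne_zero
  have hau_diff : DifferentiableAt ℝ (fun q => a (u q)) p := ha.differentiableAt.comp p hu_diff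
  have hηux_diff : DifferentiableAt ℝ (fun q => η (dirDeriv x u q)) p :=
    hη.differentiableAt.comp p hux_diff
  rw [dirDeriv_mul hau_diff hηux_diff, dirDeriv_comp hη hux_diff, dirDeriv_comp hη hux_diff,
    dirDeriv_comp ha hu_diff, dirDeriv_comm hu t x]
  ring

theorem conservation_law_of_euler_identity {lam : ℝ} {a η : ℝ → ℝ} {a' η' : ℝ} {u : E → ℝ}
    {p x t : E} (hu : ContDiffAt ℝ 2 u p) (ha : HasDerivAt a a' (u p))
    (hη : HasDerivAt η η' (dirDeriv x u p))
    (heuler : lam * η' * dirDeriv x u p ^ 2 = dirDeriv x u p * η (dirDeriv x u p))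
    (hE1 : dirDeriv x (dirDeriv t u) p + a (u p) * dirDeriv x (dirDeriv x u) p
      + lam * a' * dirDeriv x u p ^ 2 = 0) :
    dirDeriv t (fun q => η (dirDeriv x u q)) p
      + dirDeriv x (fun q => a (u q) * η (dirDeriv x u q)) p = 0 := by
  rw [dirDeriv_density_add_dirDeriv_flux hu ha hη t]
  linear_combination η' * hE1 - a' * heuler

theorem stmt4_general {lam : ℝ} (hlam : 0 < lam ∧ lam < 1) {U : Set E} (hU : IsOpen U)
    {u : E → ℝ} (hu : ContDiffOn ℝ 2 u U) {a : ℝ → ℝ} (ha : ∀ p ∈ U, DifferentiableAt ℝ a (u p))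
    {x t : E}
    (hE1 : ∀ p ∈ U, dirDeriv x (dirDeriv t u) p + a (u p) * dirDeriv x (dirDeriv x u) p
      + lam * deriv a (u p) * dirDeriv x u p ^ 2 = 0) :
    ContDiffOn ℝ 1 (fun q => |dirDeriv x u q| ^ (1 / lam)) U ∧
    ∀ p ∈ U,
      dirDeriv t (fun q => |dirDeriv x u q| ^ (1 / lam)) p
        + dirDeriv x (fun q => a (u q) * |dirDeriv x u q| ^ (1 / lam)) p = 0 := by
  obtain ⟨hlam_pos, hlam_lt⟩ := hlam
  have hexp : 1 < 1 / lam := one_lt_one_div hlam_pos hlam_lt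
  have hu_at : ∀ p ∈ U, ContDiffAt ℝ 2 u p := fun p hp => hu.contDiffAt (hU.mem_nhds hp)
  refine ⟨fun p hp => ?_, fun p hp => ?_⟩
  · have hux : ContDiffAt ℝ 1 (dirDeriv x u) p :=
      contDiffAt_dirDeriv (hu_at p hp) one_add_one_eq_two.le x
    exact ((contDiff_norm_rpow hexp).contDiffAt.comp p hux).contDiffWithinAt
  · refine conservation_law_of_euler_identity (hu_at p hp) (ha p hp).hasDerivAt
      (hasDerivAt_abs_rpow (dirDeriv x u p) hexp) ?_ (hE1 p hp)
    rw [← abs_rpow_sub_two_mul_sq (one_div_pos.mpr hlam_pos).ne']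
    field_simp

end ConservationLaw

/-- for `λ ∈ (0,1/2]` and a `C²` solution `u` of (E1)
`u_{tx} + f'(u) u_{xx} + λ f''(u) (u_x)² = 0`, the function `|u_x|^{1/λ}` is `C¹`
and the energy law `∂_t(|u_x|^{1/λ}) + ∂_x(f'(u) |u_x|^{1/λ}) = 0` holds pointwise. -/
theorem stmt4 (lam : ℝ) (hlam : 0 < lam ∧ lam ≤ 1/2)
    (f : ℝ → ℝ) (hf : ContDiff ℝ 2 f)
    (U : Set (ℝ × ℝ)) (hU : IsOpen U) (u : ℝ × ℝ → ℝ)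
    (hu : ContDiffOn ℝ 2 u U)
    (hE1 : ∀ p ∈ U,
      px (pt u) p + deriv f (u p) * px (px u) p
        + lam * deriv (deriv f) (u p) * (px u p) ^ 2 = 0) :
    ContDiffOn ℝ 1 (fun q => |px u q| ^ (1/lam)) U ∧
    ∀ p ∈ U,
      pt (fun q => |px u q| ^ (1/lam)) p
        + px (fun q => deriv f (u q) * |px u q| ^ (1/lam)) p = 0 := by
  have hf' : Differentiable ℝ (deriv f) := hf.differentiable_deriv_two
  exact stmt4_general ⟨hlam.1, by linarith [hlam.2]⟩ hU hu (fun p _ => hf' (u p)) hE1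
end

section
/- Let λ ∈ ℝ, let f : ℝ → ℝ be C², and let u be a C³ function on an open subset of ℝ² satisfying equation (E1): u_{tx} + f'(u) u_{xx} + λ f''(u) (u_x)² = 0. Define v := 2 arctan(u_x). Then v is C¹ and satisfies v_t + f'(u) v_x = −2λ f''(u) sin²(v/2) pointwise. -/
/-!
By symmetry of second derivatives, (E1) is a Riccati equation `D R = -λ f''(u) R²` for `R = u_x`
along the characteristic direction `D = ∂_t + f'(u) ∂_x`. Since `v = 2 arctan R` has
`D v = 2 D R / (1 + R²)` and `sin² (v / 2) = R² / (1 + R²)`, this becomes the equation for `v`.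
-/

open Real

section SecondDerivative

variable {𝕜 E F : Type*} [NontriviallyNormedField 𝕜] [NormedAddCommGroup E] [NormedSpace 𝕜 E]
  [NormedAddCommGroup F] [NormedSpace 𝕜 F] {u : E → F} {p : E}

theorem fderiv_fderiv_apply (hu : DifferentiableAt 𝕜 (fderiv 𝕜 u) p) (a b : E) :
    fderiv 𝕜 (fun q => fderiv 𝕜 u q a) p b = fderiv 𝕜 (fderiv 𝕜 u) p b a := by
  simp [fderiv_clm_apply hu (differentiableAt_const a)]

theorem fderiv_fderiv_apply_comm {n : WithTop ℕ∞} (hu : ContDiffAt 𝕜 n u p)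
    (hn : minSmoothness 𝕜 2 ≤ n) (a b : E) :
    fderiv 𝕜 (fun q => fderiv 𝕜 u q a) p b = fderiv 𝕜 (fun q => fderiv 𝕜 u q b) p a := by
  have hdiff : DifferentiableAt 𝕜 (fderiv 𝕜 u) p :=
    (hu.fderiv_right (m := 1) (le_minSmoothness.trans hn)).differentiableAt one_ne_zero
  rw [fderiv_fderiv_apply hdiff, fderiv_fderiv_apply hdiff, (hu.isSymmSndFDerivAt hn).eq]

theorem contDiffOn_fderiv_apply {m n : WithTop ℕ∞} {U : Set E} (hu : ContDiffOn 𝕜 n u U)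
    (hU : IsOpen U) (hmn : m + 1 ≤ n) (a : E) : ContDiffOn 𝕜 m (fun q => fderiv 𝕜 u q a) U :=
  (hu.fderiv_of_isOpen hU hmn).clm_apply contDiffOn_const

end SecondDerivative

section Angle

variable {E : Type*} [NormedAddCommGroup E] [NormedSpace ℝ E]

theorem fderiv_two_mul_arctan_of_riccati {R : E → ℝ} {p w : E} {b : ℝ}
    (hR : DifferentiableAt ℝ R p) (hw : fderiv ℝ R p w = -(b * R p ^ 2)) :
    fderiv ℝ (fun q => 2 * arctan (R q)) p w = -2 * b * sin (2 * arctan (R p) / 2) ^ 2 := by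
  have hchain : fderiv ℝ (fun q => 2 * arctan (R q)) p w
      = 2 * (1 / (1 + R p ^ 2) * fderiv ℝ R p w) := by
    simp [(hR.hasFDerivAt.arctan.const_mul 2).fderiv]
  have hsin : sin (2 * arctan (R p) / 2) ^ 2 = R p ^ 2 / (1 + R p ^ 2) := by
    rw [mul_div_cancel_left₀ _ two_ne_zero, sin_sq_arctan]
  rw [hchain, hw, hsin]
  ring

theorem stmt6_general {n : WithTop ℕ∞} (hn : 1 ≤ n) {U : Set E} (hU : IsOpen U) {u : E → ℝ}
    (hu : ContDiffOn ℝ (n + 1) u U) (ξ τ : E) {a b : E → ℝ}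
    (hE1 : ∀ p ∈ U,
      fderiv ℝ (fun q => fderiv ℝ u q τ) p ξ + a p * fderiv ℝ (fun q => fderiv ℝ u q ξ) p ξ
        + b p * fderiv ℝ u p ξ ^ 2 = 0) :
    ContDiffOn ℝ n (fun q => 2 * arctan (fderiv ℝ u q ξ)) U ∧
    ∀ p ∈ U,
      fderiv ℝ (fun q => 2 * arctan (fderiv ℝ u q ξ)) p τ
        + a p * fderiv ℝ (fun q => 2 * arctan (fderiv ℝ u q ξ)) p ξ
        = -2 * b p * sin (2 * arctan (fderiv ℝ u p ξ) / 2) ^ 2 := by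
  have hR : ContDiffOn ℝ n (fun q => fderiv ℝ u q ξ) U :=
    contDiffOn_fderiv_apply hu hU le_rfl ξ
  refine ⟨contDiffOn_const.mul (contDiff_arctan.comp_contDiffOn hR), fun p hp => ?_⟩
  have hUp : U ∈ nhds p := hU.mem_nhds hp
  have hRp : DifferentiableAt ℝ (fun q => fderiv ℝ u q ξ) p :=
    (hR.contDiffAt hUp).differentiableAt (zero_lt_one.trans_le hn).ne'
  have hsmooth : minSmoothness ℝ 2 ≤ n + 1 := by
    simpa [one_add_one_eq_two] using add_le_add_left hn 1
  have hcomm := fderiv_fderiv_apply_comm (hu.contDiffAt hUp) hsmooth ξ τ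
  have hriccati : fderiv ℝ (fun q => fderiv ℝ u q ξ) p (τ + a p • ξ)
      = -(b p * fderiv ℝ u p ξ ^ 2) := by
    rw [map_add, map_smul, smul_eq_mul, hcomm]
    exact eq_neg_of_add_eq_zero_left (hE1 p hp)
  simpa only [map_add, map_smul, smul_eq_mul] using fderiv_two_mul_arctan_of_riccati hRp hriccati

end Angle

/-- for a `C³` solution `u` of (E1)
`u_{tx} + f'(u) u_{xx} + λ f''(u) (u_x)² = 0`, the angle variable
`v := 2 arctan(u_x)` is `C¹` and satisfies `v_t + f'(u) v_x = −2λ f''(u) sin²(v/2)`. -/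
theorem stmt6 (lam : ℝ) (f : ℝ → ℝ) (hf : ContDiff ℝ 2 f)
    (U : Set (ℝ × ℝ)) (hU : IsOpen U) (u : ℝ × ℝ → ℝ)
    (hu : ContDiffOn ℝ 3 u U)
    (hE1 : ∀ p ∈ U,
      px (pt u) p + deriv f (u p) * px (px u) p
        + lam * deriv (deriv f) (u p) * (px u p) ^ 2 = 0) :
    ContDiffOn ℝ 1 (fun q => 2 * arctan (px u q)) U ∧
    ∀ p ∈ U,
      pt (fun q => 2 * arctan (px u q)) p
        + deriv f (u p) * px (fun q => 2 * arctan (px u q)) p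
        = -2 * lam * deriv (deriv f) (u p) * sin ((2 * arctan (px u p)) / 2) ^ 2 := by
  simpa only [mul_assoc] using! stmt6_general le_rfl hU (hu.of_le (by norm_num)) (1, 0) (0, 1) hE1
end

section
/- Let λ > 0, let f : ℝ → ℝ be C², let u be a C³ function on an open subset U of ℝ² satisfying equation (E1): u_{tx} + f'(u) u_{xx} + λ f''(u) (u_x)² = 0, and let Y be a C² function on U with Y_t + f'(u) Y_x = 0 and Y_x > 0 on U. Define ξ := (1 + u_x²)^{1/(2λ)} / Y_x. Then ξ_t + f'(u) ξ_x = f''(u) ξ u_x / (1 + u_x²) pointwise; equivalently, with v := 2 arctan(u_x), ξ_t + f'(u) ξ_x = (1/2) f''(u) ξ sin v. -/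
/-! Write `w = f'(u)` for the speed, `D = ∂ₜ + w ∂ₓ` for the derivative along characteristics and
`a = u_x`. Since `w_x = f''(u) a`, equation (E1) says `D a = -λ w_x a`, while the commutator
`[∂ₓ, D] = w_x ∂ₓ` turns `D Y = 0` into `D Y_x = -w_x Y_x`. The logarithmic derivative of
`ξ = (1 + a²)^{1/(2λ)} / Y_x` along `D` is therefore
`(1/λ) a (D a) / (1 + a²) - (D Y_x) / Y_x = w_x (1 - a² / (1 + a²)) = w_x / (1 + a²)`. -/

open Real

open scoped Topology

theorem sin_two_mul_arctan (x : ℝ) : sin (2 * arctan x) = 2 * x / (1 + x ^ 2) := by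
  rw [sin_eq_two_mul_tan_half_div_one_add_tan_half_sq, mul_div_cancel_left₀ _ two_ne_zero,
    tan_arctan]

section LogarithmicDerivative

variable {E : Type*} [NormedAddCommGroup E] [NormedSpace ℝ E] {a b : E → ℝ} {p : E}

theorem hasFDerivAt_one_add_sq_rpow_div {a' b' : E →L[ℝ] ℝ} (k : ℝ) (ha : HasFDerivAt a a' p)
    (hb : HasFDerivAt b b' p) (hb0 : b p ≠ 0) :
    HasFDerivAt (fun q => (1 + a q ^ 2) ^ k / b q)
      (((1 + a p ^ 2) ^ k / b p) • ((2 * k * a p / (1 + a p ^ 2)) • a' - (b p)⁻¹ • b')) p := by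
  have hpos : 0 < 1 + a p ^ 2 := by positivity
  have hpow := ((ha.pow 2).const_add 1).rpow_const (p := k) (Or.inl hpos.ne')
  have hinv := (hasDerivAt_inv hb0).comp_hasFDerivAt p hb
  simp only [div_eq_mul_inv]
  refine (hpow.mul hinv).congr_fderiv ?_
  ext v
  simp only [neg_smul, smul_neg, Function.comp_apply, rpow_sub_one hpos.ne', Nat.add_one_sub_one,
    pow_one, nsmul_eq_mul, Nat.cast_ofNat, add_apply, neg_apply, smul_apply, smul_eq_mul, sub_apply]
  field_simp
  ring

theorem fderiv_one_add_sq_rpow_div_apply_of_eq_neg {lam s : ℝ} {v : E} (hlam : lam ≠ 0)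
    (ha : DifferentiableAt ℝ a p) (hb : DifferentiableAt ℝ b p) (hb0 : b p ≠ 0)
    (hav : fderiv ℝ a p v = -(lam * s * a p)) (hbv : fderiv ℝ b p v = -(s * b p)) :
    fderiv ℝ (fun q => (1 + a q ^ 2) ^ (1 / (2 * lam)) / b q) p v
      = s * ((1 + a p ^ 2) ^ (1 / (2 * lam)) / b p) / (1 + a p ^ 2) := by
  rw [(hasFDerivAt_one_add_sq_rpow_div _ ha.hasFDerivAt hb.hasFDerivAt hb0).fderiv]
  simp only [smul_apply, sub_apply, smul_eq_mul, hav, hbv]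
  field_simp
  ring

end LogarithmicDerivative

section Characteristics

variable {φ w : ℝ × ℝ → ℝ} {p : ℝ × ℝ}

theorem pt_add_mul_px (φ : ℝ × ℝ → ℝ) (p : ℝ × ℝ) (r : ℝ) :
    pt φ p + r * px φ p = fderiv ℝ φ p (r, 1) := by
  have hdir : ((r, 1) : ℝ × ℝ) = (0, 1) + r • (1, 0) := by simp
  rw [hdir, map_add, map_smul, smul_eq_mul, pt, px]

theorem differentiableAt_px (hφ : ContDiffAt ℝ 2 φ p) : DifferentiableAt ℝ (px φ) p :=
  ((hφ.fderiv_right (m := 1) le_rfl).differentiableAt one_ne_zero).clm_apply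
    (differentiableAt_const _)

theorem px_comp {c : ℝ → ℝ} (hc : DifferentiableAt ℝ c (φ p)) (hφ : DifferentiableAt ℝ φ p) :
    px (fun q => c (φ q)) p = deriv c (φ p) * px φ p := by
  have hcomp := hc.hasDerivAt.comp_hasFDerivAt p hφ.hasFDerivAt
  exact congrArg (fun L : ℝ × ℝ →L[ℝ] ℝ => L (1, 0)) hcomp.fderiv

theorem px_pt_add_mul_px (hφ : ContDiffAt ℝ 2 φ p) (hw : DifferentiableAt ℝ w p) :
    px (fun q => pt φ q + w q * px φ q) p
      = pt (px φ) p + w p * px (px φ) p + px w p * px φ p := by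
  have hW := hw.hasFDerivAt.prodMk (hasFDerivAt_const (1 : ℝ) p)
  have hbracket : VectorField.lieBracket ℝ (fun _ => (1, 0)) (fun q => (w q, 1)) p
      = px w p • (1, 0) := by
    simp [VectorField.lieBracket, hW.fderiv, px]
  have hcomm := VectorField.fderiv_apply_lieBracket (V := fun _ => ((1, 0) : ℝ × ℝ)) hφ
    (by simp) hW.differentiableAt (differentiableAt_const _)
  rw [hbracket, map_smul, smul_eq_mul] at hcomm
  simp only [pt_add_mul_px]
  exact sub_eq_iff_eq_add'.1 hcomm.symm

theorem px_pt_comm (hφ : ContDiffAt ℝ 2 φ p) : px (pt φ) p = pt (px φ) p := by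
  simpa [px] using px_pt_add_mul_px hφ (differentiableAt_const 0)

theorem pt_px_add_mul_px_px_of_transport (hφ : ContDiffAt ℝ 2 φ p) (hw : DifferentiableAt ℝ w p)
    (hD : ∀ᶠ q in 𝓝 p, pt φ q + w q * px φ q = 0) :
    pt (px φ) p + w p * px (px φ) p = -(px w p * px φ p) := by
  have hzero : px (fun q => pt φ q + w q * px φ q) p = 0 := by
    rw [px, Filter.EventuallyEq.fderiv_eq hD]
    simp
  linarith [px_pt_add_mul_px hφ hw]

end Characteristics

theorem stmt7_general {lam : ℝ} (hlam : lam ≠ 0) {c : ℝ → ℝ} {u Y : ℝ × ℝ → ℝ} {p : ℝ × ℝ}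
    (hc : DifferentiableAt ℝ c (u p)) (hu : ContDiffAt ℝ 2 u p) (hY : ContDiffAt ℝ 2 Y p)
    (hE1 : px (pt u) p + c (u p) * px (px u) p + lam * deriv c (u p) * (px u p) ^ 2 = 0)
    (hYchar : ∀ᶠ q in 𝓝 p, pt Y q + c (u q) * px Y q = 0) (hYx : px Y p ≠ 0) :
    (pt (fun q => (1 + (px u q) ^ 2) ^ (1/(2*lam)) / px Y q) p
        + c (u p) * px (fun q => (1 + (px u q) ^ 2) ^ (1/(2*lam)) / px Y q) p
      = deriv c (u p) * ((1 + (px u p) ^ 2) ^ (1/(2*lam)) / px Y p) * px u p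
          / (1 + (px u p) ^ 2)) ∧
    (pt (fun q => (1 + (px u q) ^ 2) ^ (1/(2*lam)) / px Y q) p
        + c (u p) * px (fun q => (1 + (px u q) ^ 2) ^ (1/(2*lam)) / px Y q) p
      = (1/2) * deriv c (u p) * ((1 + (px u p) ^ 2) ^ (1/(2*lam)) / px Y p)
          * sin (2 * arctan (px u p))) := by
  have hdu : DifferentiableAt ℝ u p := hu.differentiableAt two_ne_zero
  have hDux : fderiv ℝ (px u) p (c (u p), 1) = -(lam * (deriv c (u p) * px u p) * px u p) := by
    rw [← pt_add_mul_px, ← px_pt_comm hu]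
    linarith
  have hDYx : fderiv ℝ (px Y) p (c (u p), 1) = -(deriv c (u p) * px u p * px Y p) := by
    rw [← pt_add_mul_px, ← px_comp hc hdu]
    exact pt_px_add_mul_px_px_of_transport hY (hc.comp p hdu) hYchar
  rw [pt_add_mul_px, fderiv_one_add_sq_rpow_div_apply_of_eq_neg hlam (differentiableAt_px hu)
    (differentiableAt_px hY) hYx hDux hDYx, sin_two_mul_arctan]
  constructor <;> ring

/-- let `u` be a `C³` solution of (E1)
`u_{tx} + f'(u) u_{xx} + λ f''(u) (u_x)² = 0` and let `Y` be a `C²` function with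
`Y_t + f'(u) Y_x = 0` and `Y_x > 0`.  Then `ξ := (1+u_x²)^{1/(2λ)}/Y_x` satisfies
`ξ_t + f'(u) ξ_x = f''(u) ξ u_x/(1+u_x²) = (1/2) f''(u) ξ sin v` with `v = 2 arctan u_x`. -/
theorem stmt7 (lam : ℝ) (hlam : 0 < lam) (f : ℝ → ℝ) (hf : ContDiff ℝ 2 f)
    (U : Set (ℝ × ℝ)) (hU : IsOpen U) (u Y : ℝ × ℝ → ℝ)
    (hu : ContDiffOn ℝ 3 u U) (hY : ContDiffOn ℝ 2 Y U)
    (hE1 : ∀ p ∈ U,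
      px (pt u) p + deriv f (u p) * px (px u) p
        + lam * deriv (deriv f) (u p) * (px u p) ^ 2 = 0)
    (hYchar : ∀ p ∈ U, pt Y p + deriv f (u p) * px Y p = 0)
    (hYx : ∀ p ∈ U, 0 < px Y p) :
    ∀ p ∈ U,
      (pt (fun q => (1 + (px u q) ^ 2) ^ (1/(2*lam)) / px Y q) p
          + deriv f (u p) * px (fun q => (1 + (px u q) ^ 2) ^ (1/(2*lam)) / px Y q) p
        = deriv (deriv f) (u p) * ((1 + (px u p) ^ 2) ^ (1/(2*lam)) / px Y p) * px u p
            / (1 + (px u p) ^ 2)) ∧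
      (pt (fun q => (1 + (px u q) ^ 2) ^ (1/(2*lam)) / px Y q) p
          + deriv f (u p) * px (fun q => (1 + (px u q) ^ 2) ^ (1/(2*lam)) / px Y q) p
        = (1/2) * deriv (deriv f) (u p) * ((1 + (px u p) ^ 2) ^ (1/(2*lam)) / px Y p)
            * sin (2 * arctan (px u p))) :=
  fun p hp => stmt7_general hlam.ne' (hf.differentiable_deriv_two _)
    ((hu.contDiffAt (hU.mem_nhds hp)).of_le (by norm_num)) (hY.contDiffAt (hU.mem_nhds hp))
    (hE1 p hp) (Filter.eventually_of_mem (hU.mem_nhds hp) hYchar) (hYx p hp).ne'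
end

section
/- Let λ > 0 and let f : ℝ → ℝ be C². Suppose (u, v, ξ) are C¹ functions on an open subset of ℝ² (with coordinates (Y,T)) satisfying the semi-linear system u_Y = (1/2) ξ sin v (cos²(v/2))^{1/(2λ)−1}, v_T = −2λ f''(u) sin²(v/2), ξ_T = (1/2) f''(u) ξ sin v. Then ∂_T [ ξ (cos²(v/2))^{1/(2λ)} ] = ∂_Y [ f'(u) ] pointwise (both sides equal f''(u) u_Y); that is, the 1-form defining the inverse coordinate change x_Y = ξ (cos²(v/2))^{1/(2λ)}, x_T = f'(u) is closed. -/
open Real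

/-- Partial derivative in the `Y` direction (first coordinate). -/
noncomputable def pY (φ : ℝ × ℝ → ℝ) (p : ℝ × ℝ) : ℝ := fderiv ℝ φ p (1, 0)

/-- Partial derivative in the `T` direction (second coordinate). -/
noncomputable def pT (φ : ℝ × ℝ → ℝ) (p : ℝ × ℝ) : ℝ := fderiv ℝ φ p (0, 1)

/-!
With `a = 1/(2λ)`, the power `(cos² (v/2))^a` need not be differentiable where `cos (v/2) = 0`, but
`ξ (cos² (v/2))^a` is differentiable there all the same: putting `ω = ξ sin v (cos² (v/2))^{a-1}`,
the identities `sin v = 2 sin (v/2) cos (v/2)` and `sin² + cos² = 1` give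
`ξ (cos² (v/2))^a = cos (v/2) * (ω sin (v/2) / 2 + cos (v/2) ξ (cos² (v/2))^a)`.
Since `ω = 2 u_Y` is continuous when `u` is `C¹`, this is a differentiable function vanishing at the
point times a continuous one, which is enough for the product rule. The derivative is then given by
the usual formula everywhere, and the equations for `v_T` and `ξ_T` turn it into `f''(u) u_Y`.
-/

open Asymptotics Topology

section ProductRule

variable {𝕜 E F : Type*} [NontriviallyNormedField 𝕜] [NormedAddCommGroup E] [NormedSpace 𝕜 E]
  [NormedAddCommGroup F] [NormedSpace 𝕜 F]

theorem hasFDerivAt_smul_of_eq_zero_of_continuousAt {φ : E → 𝕜} {φ' : E →L[𝕜] 𝕜} {ψ : E → F}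
    {p : E} (hφ : HasFDerivAt φ φ' p) (hφp : φ p = 0) (hψ : ContinuousAt ψ p) :
    HasFDerivAt (fun q => φ q • ψ q) (φ'.smulRight (ψ p)) p := by
  have hφO : φ =O[𝓝 p] fun q => q - p := by simpa [hφp] using hφ.isBigO_sub
  have hψo : (fun q => ψ q - ψ p) =o[𝓝 p] fun _ => (1 : ℝ) :=
    (isLittleO_one_iff ℝ).2 (tendsto_sub_nhds_zero_iff.2 hψ)
  have hvary : (fun q => φ q • (ψ q - ψ p)) =o[𝓝 p] fun q => q - p := by
    simpa using hφO.norm_right.smul_isLittleO hψo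
  have hfreeze : HasFDerivAt (fun q => φ q • ψ p) (φ'.smulRight (ψ p)) p := hφ.smul_const (ψ p)
  refine .of_isLittleO ((hfreeze.isLittleO.add hvary).congr_left fun q => ?_)
  simp only [hφp, zero_smul, smul_sub]
  abel

end ProductRule

section HalfAngle

theorem sin_eq_two_mul_sin_half_mul_cos_half (θ : ℝ) :
    sin θ = 2 * sin (θ / 2) * cos (θ / 2) := by
  rw [← sin_two_mul, mul_div_cancel₀ θ two_ne_zero]

theorem cos_half_sq_rpow_eq_sq_mul {a θ : ℝ} (hc : cos (θ / 2) ≠ 0) :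
    (cos (θ / 2) ^ 2) ^ a = cos (θ / 2) ^ 2 * (cos (θ / 2) ^ 2) ^ (a - 1) := by
  rw [rpow_sub_one (pow_ne_zero 2 hc), mul_div_cancel₀ _ (pow_ne_zero 2 hc)]

theorem cos_half_sq_rpow_eq_cos_half_mul {a : ℝ} (ha : a ≠ 0) (θ : ℝ) :
    (cos (θ / 2) ^ 2) ^ a =
      cos (θ / 2) * (1 / 2 * sin (θ / 2) * (sin θ * (cos (θ / 2) ^ 2) ^ (a - 1)) +
        cos (θ / 2) * (cos (θ / 2) ^ 2) ^ a) := by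
  by_cases hc : cos (θ / 2) = 0
  · simp [hc, zero_rpow ha]
  · rw [cos_half_sq_rpow_eq_sq_mul hc, sin_eq_two_mul_sin_half_mul_cos_half θ]
    linear_combination -(cos (θ / 2) ^ 2 * (cos (θ / 2) ^ 2) ^ (a - 1)) *
      sin_sq_add_cos_sq (θ / 2)

theorem hasDerivAt_cos_half (θ : ℝ) :
    HasDerivAt (fun x => cos (x / 2)) (-(sin (θ / 2) / 2)) θ :=
  ((hasDerivAt_id' θ).div_const 2).cos.congr_deriv (by ring)

theorem hasDerivAt_cos_half_sq_rpow {a θ : ℝ} (hc : cos (θ / 2) ≠ 0) :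
    HasDerivAt (fun x => (cos (x / 2) ^ 2) ^ a)
      (-(a * sin (θ / 2) * cos (θ / 2) * (cos (θ / 2) ^ 2) ^ (a - 1))) θ := by
  refine (((hasDerivAt_cos_half θ).fun_pow 2).rpow_const (.inl (pow_ne_zero 2 hc))).congr_deriv ?_
  push_cast
  ring

end HalfAngle

section HalfAngleWeight

variable {E : Type*} [NormedAddCommGroup E] [NormedSpace ℝ E] {v ξ : E → ℝ} {v' ξ' : E →L[ℝ] ℝ}
  {p : E} {a : ℝ}

theorem hasFDerivAt_mul_cos_half_sq_rpow_of_ne_zero (hc : cos (v p / 2) ≠ 0)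
    (hξ : HasFDerivAt ξ ξ' p) (hv : HasFDerivAt v v' p) :
    HasFDerivAt (fun q => ξ q * (cos (v q / 2) ^ 2) ^ a)
      ((cos (v p / 2) ^ 2) ^ (a - 1) •
        (cos (v p / 2) ^ 2 • ξ' - (a * ξ p * sin (v p / 2) * cos (v p / 2)) • v')) p := by
  refine (hξ.fun_mul ((hasDerivAt_cos_half_sq_rpow hc).comp_hasFDerivAt p hv)).congr_fderiv ?_
  rw [Function.comp_apply, cos_half_sq_rpow_eq_sq_mul (a := a) hc]
  module

theorem hasFDerivAt_mul_cos_half_sq_rpow_of_eq_zero (ha : 0 < a) (hc : cos (v p / 2) = 0)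
    (hξ : ContinuousAt ξ p) (hv : HasFDerivAt v v' p)
    (hω : ContinuousAt (fun q => ξ q * sin (v q) * (cos (v q / 2) ^ 2) ^ (a - 1)) p) :
    HasFDerivAt (fun q => ξ q * (cos (v q / 2) ^ 2) ^ a) (0 : E →L[ℝ] ℝ) p := by
  let ψ : E → ℝ := fun q =>
    1 / 2 * sin (v q / 2) * (ξ q * sin (v q) * (cos (v q / 2) ^ 2) ^ (a - 1)) +
      cos (v q / 2) * (ξ q * (cos (v q / 2) ^ 2) ^ a)
  have hv_cont : ContinuousAt v p := hv.continuousAt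
  have hψ : ContinuousAt ψ p := by
    have hpow : ContinuousAt (fun q => (cos (v q / 2) ^ 2) ^ a) p :=
      ContinuousAt.rpow_const (by fun_prop) (.inr ha.le)
    fun_prop
  have hψp : ψ p = 0 := by
    simp [ψ, hc, sin_eq_two_mul_sin_half_mul_cos_half (v p)]
  have hfactor : (fun q => ξ q * (cos (v q / 2) ^ 2) ^ a) = fun q => cos (v q / 2) • ψ q := by
    funext q
    rw [smul_eq_mul]
    linear_combination ξ q * cos_half_sq_rpow_eq_cos_half_mul ha.ne' (v q)
  rw [hfactor]
  simpa [hψp] using hasFDerivAt_smul_of_eq_zero_of_continuousAt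
    ((hasDerivAt_cos_half (v p)).comp_hasFDerivAt p hv) hc hψ

theorem hasFDerivAt_mul_cos_half_sq_rpow (ha : 0 < a)
    (hξ : HasFDerivAt ξ ξ' p) (hv : HasFDerivAt v v' p)
    (hω : ContinuousAt (fun q => ξ q * sin (v q) * (cos (v q / 2) ^ 2) ^ (a - 1)) p) :
    HasFDerivAt (fun q => ξ q * (cos (v q / 2) ^ 2) ^ a)
      ((cos (v p / 2) ^ 2) ^ (a - 1) •
        (cos (v p / 2) ^ 2 • ξ' - (a * ξ p * sin (v p / 2) * cos (v p / 2)) • v')) p := by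
  by_cases hc : cos (v p / 2) = 0
  · simpa [hc] using hasFDerivAt_mul_cos_half_sq_rpow_of_eq_zero ha hc hξ.continuousAt hv hω
  · exact hasFDerivAt_mul_cos_half_sq_rpow_of_ne_zero hc hξ hv

end HalfAngleWeight

theorem stmt8_general {E : Type*} [NormedAddCommGroup E] [NormedSpace ℝ E] (y t : E)
    (lam : ℝ) (hlam : 0 < lam) (f' f'' : ℝ → ℝ) (hf : ∀ x, HasDerivAt f' (f'' x) x)
    (U : Set E) (hU : IsOpen U) (u v ξ : E → ℝ)
    (hu : ContDiffOn ℝ 1 u U) (hv : DifferentiableOn ℝ v U) (hξ : DifferentiableOn ℝ ξ U)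
    (hu_y : ∀ p ∈ U, fderiv ℝ u p y =
      1 / 2 * ξ p * sin (v p) * (cos (v p / 2) ^ 2) ^ (1 / (2 * lam) - 1))
    (hv_t : ∀ p ∈ U, fderiv ℝ v p t = -2 * lam * f'' (u p) * sin (v p / 2) ^ 2)
    (hξ_t : ∀ p ∈ U, fderiv ℝ ξ p t = 1 / 2 * f'' (u p) * ξ p * sin (v p)) :
    ∀ p ∈ U,
      DifferentiableAt ℝ (fun q => ξ q * (cos (v q / 2) ^ 2) ^ (1 / (2 * lam))) p ∧
      fderiv ℝ (fun q => ξ q * (cos (v q / 2) ^ 2) ^ (1 / (2 * lam))) p t =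
        fderiv ℝ (fun q => f' (u q)) p y ∧
      fderiv ℝ (fun q => ξ q * (cos (v q / 2) ^ 2) ^ (1 / (2 * lam))) p t =
        f'' (u p) * fderiv ℝ u p y := by
  intro p hp
  have hUp : U ∈ 𝓝 p := hU.mem_nhds hp
  have hω : ContinuousAt
      (fun q => ξ q * sin (v q) * (cos (v q / 2) ^ 2) ^ (1 / (2 * lam) - 1)) p := by
    have hu_y_cont : ContinuousAt (fun q => 2 * fderiv ℝ u q y) p :=
      (((hu.continuousOn_fderiv_of_isOpen hU le_rfl).continuousAt hUp).clm_apply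
        continuousAt_const).const_mul 2
    refine hu_y_cont.congr (Filter.eventually_of_mem hUp fun q hq => ?_)
    simp only [hu_y q hq]
    ring
  have hW := hasFDerivAt_mul_cos_half_sq_rpow (by positivity : 0 < 1 / (2 * lam))
    (hξ.differentiableAt hUp).hasFDerivAt (hv.differentiableAt hUp).hasFDerivAt hω
  have hW_t : fderiv ℝ (fun q => ξ q * (cos (v q / 2) ^ 2) ^ (1 / (2 * lam))) p t =
      f'' (u p) * fderiv ℝ u p y :=
    calc
      _ = (cos (v p / 2) ^ 2) ^ (1 / (2 * lam) - 1) *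
            (cos (v p / 2) ^ 2 * fderiv ℝ ξ p t -
              1 / (2 * lam) * ξ p * sin (v p / 2) * cos (v p / 2) * fderiv ℝ v p t) := by
        rw [hW.fderiv]
        rfl
      _ = f'' (u p) * (1 / 2 * ξ p * sin (v p) *
            (cos (v p / 2) ^ 2) ^ (1 / (2 * lam) - 1)) := by
        rw [hv_t p hp, hξ_t p hp, sin_eq_two_mul_sin_half_mul_cos_half (v p), cos_sq' (v p / 2)]
        field
      _ = f'' (u p) * fderiv ℝ u p y := by rw [hu_y p hp]
  have hfu_y : fderiv ℝ (fun q => f' (u q)) p y = f'' (u p) * fderiv ℝ u p y := by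
    have hu_p : HasFDerivAt u (fderiv ℝ u p) p :=
      ((hu.differentiableOn one_ne_zero).differentiableAt hUp).hasFDerivAt
    exact DFunLike.congr_fun ((hf (u p)).comp_hasFDerivAt p hu_p).fderiv y
  exact ⟨hW.differentiableAt, hW_t.trans hfu_y.symm, hW_t⟩

/-- for `C¹` solutions `(u,v,ξ)` of the semi-linear system
`u_Y = (1/2) ξ sin v (cos²(v/2))^{1/(2λ)−1}`, `v_T = −2λ f''(u) sin²(v/2)`,
`ξ_T = (1/2) f''(u) ξ sin v`, one has
`∂_T[ξ (cos²(v/2))^{1/(2λ)}] = ∂_Y[f'(u)]`, both sides being `f''(u) u_Y`;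
i.e. the 1-form defining `x_Y = ξ (cos²(v/2))^{1/(2λ)}`, `x_T = f'(u)` is closed. -/
theorem stmt8 (lam : ℝ) (hlam : 0 < lam) (f : ℝ → ℝ) (hf : ContDiff ℝ 2 f)
    (U : Set (ℝ × ℝ)) (hU : IsOpen U) (u v ξ : ℝ × ℝ → ℝ)
    (hu : ContDiffOn ℝ 1 u U) (hv : ContDiffOn ℝ 1 v U) (hξ : ContDiffOn ℝ 1 ξ U)
    (h1 : ∀ p ∈ U,
      pY u p = (1/2) * ξ p * sin (v p) * (cos (v p / 2) ^ 2) ^ (1/(2*lam) - 1))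
    (h2 : ∀ p ∈ U,
      pT v p = -2 * lam * deriv (deriv f) (u p) * sin (v p / 2) ^ 2)
    (h3 : ∀ p ∈ U,
      pT ξ p = (1/2) * deriv (deriv f) (u p) * ξ p * sin (v p)) :
    ∀ p ∈ U,
      pT (fun q => ξ q * (cos (v q / 2) ^ 2) ^ (1/(2*lam))) p
          = pY (fun q => deriv f (u q)) p ∧
      pT (fun q => ξ q * (cos (v q / 2) ^ 2) ^ (1/(2*lam))) p
          = deriv (deriv f) (u p) * pY u p := by
  have hf' : Differentiable ℝ (deriv f) := hf.deriv'.differentiable one_ne_zero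
  exact fun p hp => (stmt8_general (1, 0) (0, 1) lam hlam (deriv f) (deriv (deriv f))
    (fun x => (hf' x).hasDerivAt) U hU u v ξ hu (hv.differentiableOn one_ne_zero)
    (hξ.differentiableOn one_ne_zero) h1 h2 h3 p hp).2
end

section
/- Let λ ∈ (0, 1/2] and let x, u, v, ξ : [Y₁, Y₂] → ℝ be differentiable functions with ξ(Y) > 0 for all Y, x'(Y) = ξ(Y) (cos²(v(Y)/2))^{1/(2λ)}, and u'(Y) = (1/2) ξ(Y) sin(v(Y)) (cos²(v(Y)/2))^{1/(2λ)−1} for all Y ∈ [Y₁, Y₂]. If x(Y₁) = x(Y₂), then u is constant on [Y₁, Y₂]; in particular u(Y₁) = u(Y₂). (Indeed x' ≥ 0 and x(Y₁) = x(Y₂) force x' ≡ 0, hence cos(v/2) ≡ 0 since ξ > 0, hence sin v = 2 sin(v/2) cos(v/2) ≡ 0 and u' ≡ 0.) -/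
open Real Set

theorem eq_left_of_monotoneOn_Icc {α β : Type*} [Preorder α] [PartialOrder β] {f : α → β}
    {a b : α} (hf : MonotoneOn f (Icc a b)) (hab : f a = f b) {t : α} (ht : t ∈ Icc a b) :
    f t = f a := by
  have hle : a ≤ b := ht.1.trans ht.2
  exact le_antisymm ((hf ht (right_mem_Icc.2 hle) ht.2).trans hab.ge)
    (hf (left_mem_Icc.2 hle) ht ht.1)

section IntervalDerivatives

variable {f f' g g' : ℝ → ℝ} {a b : ℝ}

theorem monotoneOn_Icc_of_hasDerivAt_nonneg (hfc : ContinuousOn f (Icc a b))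
    (hf : ∀ t ∈ Ioo a b, HasDerivAt f (f' t) t) (hf' : ∀ t ∈ Ioo a b, 0 ≤ f' t) :
    MonotoneOn f (Icc a b) :=
  monotoneOn_of_hasDerivWithinAt_nonneg (convex_Icc a b) hfc
    (by simpa only [interior_Icc] using fun t ht => (hf t ht).hasDerivWithinAt)
    (by simpa only [interior_Icc] using hf')

theorem eq_left_of_hasDerivAt_zero (hfc : ContinuousOn f (Icc a b))
    (hf : ∀ t ∈ Ioo a b, HasDerivAt f 0 t) {t : ℝ} (ht : t ∈ Icc a b) : f t = f a := by
  have ha : a ∈ Icc a b := left_mem_Icc.2 (ht.1.trans ht.2)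
  have hmono : MonotoneOn f (Icc a b) :=
    monotoneOn_Icc_of_hasDerivAt_nonneg hfc hf fun _ _ => le_rfl
  have hmono_neg : MonotoneOn (-f) (Icc a b) :=
    monotoneOn_Icc_of_hasDerivAt_nonneg hfc.neg (fun s hs => (hf s hs).neg) fun _ _ => neg_zero.ge
  exact le_antisymm (neg_le_neg_iff.1 (hmono_neg ha ht ht.1)) (hmono ha ht ht.1)

theorem deriv_eq_zero_of_nonneg_of_endpoints_eq (hfc : ContinuousOn f (Icc a b))
    (hf : ∀ t ∈ Ioo a b, HasDerivAt f (f' t) t) (hf' : ∀ t ∈ Ioo a b, 0 ≤ f' t)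
    (hab : f a = f b) {t : ℝ} (ht : t ∈ Ioo a b) : f' t = 0 := by
  have hconst : ∀ s ∈ Icc a b, f s = f a := fun s hs =>
    eq_left_of_monotoneOn_Icc (monotoneOn_Icc_of_hasDerivAt_nonneg hfc hf hf') hab hs
  have hlocal : f =ᶠ[nhds t] fun _ => f a :=
    Filter.eventually_of_mem (Icc_mem_nhds ht.1 ht.2) hconst
  exact (hf t ht).unique ((hasDerivAt_const t (f a)).congr_of_eventuallyEq hlocal)

theorem eq_left_of_deriv_eq_zero_imp (hfc : ContinuousOn f (Icc a b))
    (hf : ∀ t ∈ Ioo a b, HasDerivAt f (f' t) t) (hf' : ∀ t ∈ Ioo a b, 0 ≤ f' t)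
    (hab : f a = f b) (hgc : ContinuousOn g (Icc a b))
    (hg : ∀ t ∈ Ioo a b, HasDerivAt g (g' t) t)
    (hfg : ∀ t ∈ Ioo a b, f' t = 0 → g' t = 0) {t : ℝ} (ht : t ∈ Icc a b) : g t = g a := by
  refine eq_left_of_hasDerivAt_zero hgc (fun s hs => ?_) ht
  rw [← hfg s hs (deriv_eq_zero_of_nonneg_of_endpoints_eq hfc hf hf' hab hs)]
  exact hg s hs

end IntervalDerivatives

theorem sin_eq_zero_of_cos_half_eq_zero {θ : ℝ} (h : cos (θ / 2) = 0) : sin θ = 0 := by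
  rw [← mul_div_cancel₀ θ (two_ne_zero' ℝ), sin_two_mul, h, mul_zero]

theorem stmt9_general {lam : ℝ} (hlam : 0 < lam ∧ lam ≤ 1 / 2) {Y₁ Y₂ : ℝ} {x u v ξ : ℝ → ℝ}
    (hξ : ∀ Y ∈ Ioo Y₁ Y₂, 0 ≤ ξ Y) (hxc : ContinuousOn x (Icc Y₁ Y₂))
    (hx : ∀ Y ∈ Ioo Y₁ Y₂, HasDerivAt x (ξ Y * (cos (v Y / 2) ^ 2) ^ (1 / (2 * lam))) Y)
    (huc : ContinuousOn u (Icc Y₁ Y₂))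
    (hu : ∀ Y ∈ Ioo Y₁ Y₂,
      HasDerivAt u ((1 / 2) * ξ Y * sin (v Y) * (cos (v Y / 2) ^ 2) ^ (1 / (2 * lam) - 1)) Y)
    (hend : x Y₁ = x Y₂) : ∀ Y ∈ Icc Y₁ Y₂, u Y = u Y₁ := by
  have hexp : 1 / (2 * lam) ≠ 0 := (one_div_pos.2 (mul_pos two_pos hlam.1)).ne'
  have hx_nonneg : ∀ Y ∈ Ioo Y₁ Y₂, 0 ≤ ξ Y * (cos (v Y / 2) ^ 2) ^ (1 / (2 * lam)) :=
    fun Y hY => mul_nonneg (hξ Y hY) (rpow_nonneg (sq_nonneg _) _)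
  refine fun Y hY => eq_left_of_deriv_eq_zero_imp hxc hx hx_nonneg hend huc hu (fun Z _ hZ => ?_) hY
  -- The power of `cos²` in `u'` need not vanish: for `lam = 1/2` its exponent is `0`.
  have hξ_or_sin : ξ Z = 0 ∨ sin (v Z) = 0 := by
    refine (mul_eq_zero.1 hZ).imp_right fun hpow => sin_eq_zero_of_cos_half_eq_zero ?_
    exact sq_eq_zero_iff.1 ((rpow_eq_zero (sq_nonneg _) hexp).1 hpow)
  rcases hξ_or_sin with h | h <;> simp only [h, mul_zero, zero_mul]

/-- if `ξ > 0`, `x' = ξ (cos²(v/2))^{1/(2λ)}`,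
`u' = (1/2) ξ sin v (cos²(v/2))^{1/(2λ)−1}` on `[Y₁,Y₂]` and `x(Y₁) = x(Y₂)`,
then `u` is constant on `[Y₁,Y₂]`; in particular `u(Y₁) = u(Y₂)`. -/
theorem stmt9 (lam : ℝ) (hlam : 0 < lam ∧ lam ≤ 1/2)
    (Y₁ Y₂ : ℝ) (hY : Y₁ ≤ Y₂) (x u v ξ : ℝ → ℝ)
    (hv : DifferentiableOn ℝ v (Icc Y₁ Y₂))
    (hξdiff : DifferentiableOn ℝ ξ (Icc Y₁ Y₂))
    (hξ : ∀ Y ∈ Icc Y₁ Y₂, 0 < ξ Y)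
    (hx : ∀ Y ∈ Icc Y₁ Y₂,
      HasDerivWithinAt x (ξ Y * (cos (v Y / 2) ^ 2) ^ (1/(2*lam))) (Icc Y₁ Y₂) Y)
    (hu : ∀ Y ∈ Icc Y₁ Y₂,
      HasDerivWithinAt u
        ((1/2) * ξ Y * sin (v Y) * (cos (v Y / 2) ^ 2) ^ (1/(2*lam) - 1)) (Icc Y₁ Y₂) Y)
    (hend : x Y₁ = x Y₂) :
    (∀ Y ∈ Icc Y₁ Y₂, u Y = u Y₁) ∧ u Y₁ = u Y₂ := by
  have hu_const : ∀ Y ∈ Icc Y₁ Y₂, u Y = u Y₁ := stmt9_general hlam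
    (fun Y hY => (hξ Y (Ioo_subset_Icc_self hY)).le) (HasDerivWithinAt.continuousOn hx)
    (fun Y hY => (hx Y (Ioo_subset_Icc_self hY)).hasDerivAt (Icc_mem_nhds hY.1 hY.2))
    (HasDerivWithinAt.continuousOn hu)
    (fun Y hY => (hu Y (Ioo_subset_Icc_self hY)).hasDerivAt (Icc_mem_nhds hY.1 hY.2)) hend
  exact ⟨hu_const, (hu_const Y₂ (right_mem_Icc.2 hY)).symm⟩
end

section
/- Let M ≥ 0, r > 0, and let ξ : [0, r] → ℝ be differentiable with ξ(0) = 1 and ξ'(T) = (1/2) g(T) ξ(T) sin(v(T)) for all T ∈ [0, r], where g, v : [0, r] → ℝ are functions with |g(T)| ≤ M for all T. Then e^{−MT/2} ≤ ξ(T) ≤ e^{MT/2} for all T ∈ [0, r]; in particular ξ(T) > 0 and ξ(T) ≤ e^{Mr/2}. -/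
/-!
Grönwall's inequality for `‖f'‖ ≤ K ‖f‖`, applied in both directions of time, shows that `‖f‖`
changes by a factor of at most `exp (K |y - x|)` between any two times. In particular `f` cannot
vanish at one time without vanishing at all times, so a real-valued `f` keeps its sign and the
bounds on `|f|` are bounds on `f`.
-/

open Real Set

section NormedSpace

variable {E : Type*} [NormedAddCommGroup E] [NormedSpace ℝ E] {f f' : ℝ → E} {s : Set ℝ}
  {K x y : ℝ}

theorem norm_le_norm_mul_exp_of_norm_deriv_le_of_le (hs : s.OrdConnected)
    (hf : ∀ t ∈ s, HasDerivWithinAt f (f' t) s t) (bound : ∀ t ∈ s, ‖f' t‖ ≤ K * ‖f t‖)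
    (hx : x ∈ s) (hy : y ∈ s) (hxy : x ≤ y) :
    ‖f y‖ ≤ ‖f x‖ * exp (K * (y - x)) := by
  have hsub : Icc x y ⊆ s := hs.out hx hy
  have hcont : ContinuousOn f (Icc x y) := fun t ht =>
    (hf t (hsub ht)).continuousWithinAt.mono hsub
  have hright : ∀ t ∈ Ico x y, HasDerivWithinAt f (f' t) (Ici t) t := fun t ht =>
    ((hf t (hsub (Ico_subset_Icc_self ht))).mono hsub).mono_of_mem_nhdsWithin
      (Icc_mem_nhdsGE_of_mem ht)
  have hbound : ∀ t ∈ Ico x y, ‖f' t‖ ≤ K * ‖f t‖ + 0 := fun t ht => by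
    simpa only [add_zero] using bound t (hsub (Ico_subset_Icc_self ht))
  simpa only [gronwallBound_ε0] using
    norm_le_gronwallBound_of_norm_deriv_right_le hcont hright le_rfl hbound y
      (right_mem_Icc.2 hxy)

theorem norm_le_norm_mul_exp_of_norm_deriv_le (hs : s.OrdConnected)
    (hf : ∀ t ∈ s, HasDerivWithinAt f (f' t) s t) (bound : ∀ t ∈ s, ‖f' t‖ ≤ K * ‖f t‖)
    (hx : x ∈ s) (hy : y ∈ s) :
    ‖f y‖ ≤ ‖f x‖ * exp (K * |y - x|) := by
  rcases le_total x y with hxy | hyx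
  · rw [abs_of_nonneg (sub_nonneg.2 hxy)]
    exact norm_le_norm_mul_exp_of_norm_deriv_le_of_le hs hf bound hx hy hxy
  · have hreflect : ∀ t ∈ Neg.neg ⁻¹' s,
        HasDerivWithinAt (f ∘ Neg.neg) (-f' (-t)) (Neg.neg ⁻¹' s) t := fun t ht => by
      simpa only [neg_one_smul] using
        (hf (-t) ht).scomp t (hasDerivWithinAt_neg t _) (mapsTo_preimage _ _)
    have hreflect_bound : ∀ t ∈ Neg.neg ⁻¹' s, ‖-f' (-t)‖ ≤ K * ‖(f ∘ Neg.neg) t‖ := fun t ht => by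
      simpa only [norm_neg, Function.comp_apply] using bound (-t) ht
    have h := norm_le_norm_mul_exp_of_norm_deriv_le_of_le (x := -x) (y := -y)
      (hs.preimage_anti fun _ _ => neg_le_neg) hreflect hreflect_bound
      (by simpa using hx) (by simpa using hy) (neg_le_neg hyx)
    rw [abs_of_nonpos (sub_nonpos.2 hyx), neg_sub]
    simpa only [Function.comp_apply, neg_neg, neg_sub_neg] using h

theorem norm_mul_exp_neg_le_norm_of_norm_deriv_le (hs : s.OrdConnected)
    (hf : ∀ t ∈ s, HasDerivWithinAt f (f' t) s t) (bound : ∀ t ∈ s, ‖f' t‖ ≤ K * ‖f t‖)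
    (hx : x ∈ s) (hy : y ∈ s) :
    ‖f x‖ * exp (-(K * |y - x|)) ≤ ‖f y‖ := by
  rw [exp_neg, mul_inv_le_iff₀ (exp_pos _), abs_sub_comm]
  exact norm_le_norm_mul_exp_of_norm_deriv_le hs hf bound hy hx

theorem ne_zero_of_norm_deriv_le_mul_norm (hs : s.OrdConnected)
    (hf : ∀ t ∈ s, HasDerivWithinAt f (f' t) s t) (bound : ∀ t ∈ s, ‖f' t‖ ≤ K * ‖f t‖)
    (hx : x ∈ s) (hy : y ∈ s) (hfx : f x ≠ 0) :
    f y ≠ 0 :=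
  norm_pos_iff.1 <| (mul_pos (norm_pos_iff.2 hfx) (exp_pos _)).trans_le <|
    norm_mul_exp_neg_le_norm_of_norm_deriv_le hs hf bound hx hy

end NormedSpace

section Real

variable {f f' : ℝ → ℝ} {s : Set ℝ} {K x y : ℝ}

theorem pos_of_abs_deriv_le_mul_abs (hs : s.OrdConnected)
    (hf : ∀ t ∈ s, HasDerivWithinAt f (f' t) s t) (bound : ∀ t ∈ s, |f' t| ≤ K * |f t|)
    (hx : x ∈ s) (hy : y ∈ s) (hfx : 0 < f x) :
    0 < f y :=
  hs.isPreconnected.lt_of_ne (fun t ht => (hf t ht).continuousWithinAt)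
    (fun _ ht => ne_zero_of_norm_deriv_le_mul_norm hs hf bound hx ht hfx.ne') ⟨x, hx, hfx⟩ hy

theorem mem_Icc_mul_exp_of_abs_deriv_le_mul_abs (hs : s.OrdConnected)
    (hf : ∀ t ∈ s, HasDerivWithinAt f (f' t) s t) (bound : ∀ t ∈ s, |f' t| ≤ K * |f t|)
    (hx : x ∈ s) (hy : y ∈ s) (hfx : 0 < f x) :
    f y ∈ Icc (f x * exp (-(K * |y - x|))) (f x * exp (K * |y - x|)) := by
  have hfy : 0 < f y := pos_of_abs_deriv_le_mul_abs hs hf bound hx hy hfx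
  have hlower := norm_mul_exp_neg_le_norm_of_norm_deriv_le hs hf bound hx hy
  have hupper := norm_le_norm_mul_exp_of_norm_deriv_le hs hf bound hx hy
  rw [norm_of_nonneg hfx.le, norm_of_nonneg hfy.le] at hlower hupper
  exact ⟨hlower, hupper⟩

end Real

theorem abs_half_mul_mul_sin_le {M a : ℝ} (ha : |a| ≤ M) (z θ : ℝ) :
    |1 / 2 * a * z * sin θ| ≤ M / 2 * |z| :=
  calc |1 / 2 * a * z * sin θ| = |a| / 2 * |z| * |sin θ| := by
        simp only [abs_mul, abs_of_pos (one_half_pos (α := ℝ))]; ring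
    _ ≤ |a| / 2 * |z| := mul_le_of_le_one_right (by positivity) (abs_sin_le_one θ)
    _ ≤ M / 2 * |z| := by gcongr

/-- a priori exponential bounds on `ξ` with `ξ(0) = 1` and
`ξ' = (1/2) g ξ sin v`, `|g| ≤ M`, on `[0,r]`:
`e^{−MT/2} ≤ ξ(T) ≤ e^{MT/2}`; in particular `ξ(T) > 0` and `ξ(T) ≤ e^{Mr/2}`. -/
theorem stmt12 (M r : ℝ) (hM : 0 ≤ M) (hr : 0 < r)
    (ξ g v : ℝ → ℝ) (hξ0 : ξ 0 = 1)
    (hg : ∀ T ∈ Icc (0:ℝ) r, |g T| ≤ M)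
    (hξ : ∀ T ∈ Icc (0:ℝ) r,
      HasDerivWithinAt ξ ((1/2) * g T * ξ T * sin (v T)) (Icc (0:ℝ) r) T) :
    ∀ T ∈ Icc (0:ℝ) r,
      exp (-(M * T) / 2) ≤ ξ T ∧ ξ T ≤ exp (M * T / 2) ∧
      0 < ξ T ∧ ξ T ≤ exp (M * r / 2) := by
  intro T hT
  have h0 : (0 : ℝ) ∈ Icc 0 r := left_mem_Icc.2 hr.le
  obtain ⟨hlower, hupper⟩ : ξ T ∈ Icc (exp (-(M * T) / 2)) (exp (M * T / 2)) := by
    have h := mem_Icc_mul_exp_of_abs_deriv_le_mul_abs ordConnected_Icc hξ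
      (fun t ht => abs_half_mul_mul_sin_le (hg t ht) (ξ t) (v t)) h0 hT (hξ0 ▸ one_pos)
    rwa [hξ0, one_mul, one_mul, sub_zero, abs_of_nonneg hT.1, div_mul_eq_mul_div, ← neg_div] at h
  have hexp : exp (M * T / 2) ≤ exp (M * r / 2) := by
    gcongr
    exact hT.2
  exact ⟨hlower, hupper, (exp_pos _).trans_le hlower, hupper.trans hexp⟩
end

section
/- Let λ ∈ ℝ, let c : ℝ → ℝ be C¹ with c(u) > 0 for all u, and let u be a C² function on an open subset of ℝ² satisfying equation (E2): u_{tt} − c(u)² u_{xx} − 2λ c(u) c'(u) (u_x)² = 0. Define R := u_t + c(u) u_x, S := u_t − c(u) u_x, w := 2 arctan R, v := 2 arctan S. Then pointwise: w_t − c(u) w_x = (c'(u)/c(u)) · (1/(1+R²)) · [ λ R² + (λ−1) S² − (2λ−1) R S ] and v_t + c(u) v_x = (c'(u)/c(u)) · (1/(1+S²)) · [ λ S² + (λ−1) R² − (2λ−1) R S ]. -/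
/-!
Differentiating `R = u_t + c(u) u_x` along `∂_t - c(u) ∂_x`, the mixed derivatives `c u_{xt}` and
`c u_{tx}` cancel by symmetry of the second derivative, and (E2) replaces `u_{tt} - c² u_{xx}`:
`R_t - c R_x = c' u_x (u_t + (2λ - 1) c u_x)`. With `u_t = (R + S)/2` and `c u_x = (R - S)/2` this
is `c'/(2c)` times a quadratic form in `R` and `S`, and `2 arctan` contributes the factor
`2/(1 + R²)`. Since (E2) is invariant under `c ↦ -c`, which exchanges `R` and `S`, the equation for
`v` is the equation for `w` with wave speed `-c`.
-/

open Real

open Topology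

section SecondDerivative

variable {𝕜 E F : Type*} [NontriviallyNormedField 𝕜] [NormedAddCommGroup E] [NormedSpace 𝕜 E]
  [NormedAddCommGroup F] [NormedSpace 𝕜 F] {f : E → F} {x : E}

lemma fderiv_fderiv_apply_s14 (hf : DifferentiableAt 𝕜 (fderiv 𝕜 f) x) (v w : E) :
    fderiv 𝕜 (fun y => fderiv 𝕜 f y v) x w = fderiv 𝕜 (fderiv 𝕜 f) x w v := by
  simp [fderiv_clm_apply hf (differentiableAt_const v)]

lemma fderiv_fderiv_apply_comm_s14 [IsRCLikeNormedField 𝕜]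
    (hf : ∀ᶠ y in 𝓝 x, DifferentiableAt 𝕜 f y) (hf' : DifferentiableAt 𝕜 (fderiv 𝕜 f) x)
    (v w : E) :
    fderiv 𝕜 (fun y => fderiv 𝕜 f y v) x w = fderiv 𝕜 (fun y => fderiv 𝕜 f y w) x v := by
  rw [fderiv_fderiv_apply_s14 hf', fderiv_fderiv_apply_s14 hf']
  exact second_derivative_symmetric_of_eventually (hf.mono fun _ h => h.hasFDerivAt)
    hf'.hasFDerivAt w v

end SecondDerivative

lemma fderiv_two_mul_arctan_apply {E : Type*} [NormedAddCommGroup E] [NormedSpace ℝ E]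
    {f : E → ℝ} {x : E} (hf : DifferentiableAt ℝ f x) (v : E) :
    fderiv ℝ (fun y => 2 * arctan (f y)) x v = 2 / (1 + f x ^ 2) * fderiv ℝ f x v := by
  rw [fderiv_const_mul hf.arctan, fderiv_arctan hf]
  simp only [smul_apply, smul_eq_mul]
  ring

/-- The wave equation (E2) for `u` at the single point `p`, meaningful only where `u` is twice
differentiable: elsewhere `px` and `pt` return junk values. -/
def SolvesE2At (lam : ℝ) (c : ℝ → ℝ) (u : ℝ × ℝ → ℝ) (p : ℝ × ℝ) : Prop :=
  pt (pt u) p - (c (u p)) ^ 2 * px (px u) p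
    - 2 * lam * c (u p) * deriv c (u p) * (px u p) ^ 2 = 0

/-- The Riemann-type variable `R = u_t + c(u) u_x`. Its companion `S = u_t - c(u) u_x` is not
defined separately: it is `riemannVar (-c) u`. -/
noncomputable def riemannVar (c : ℝ → ℝ) (u : ℝ × ℝ → ℝ) (p : ℝ × ℝ) : ℝ :=
  pt u p + c (u p) * px u p

lemma riemannVar_neg (c : ℝ → ℝ) (u : ℝ × ℝ → ℝ) :
    riemannVar (-c) u = fun p => pt u p - c (u p) * px u p := by
  funext p
  simp only [riemannVar, Pi.neg_apply, neg_mul, sub_eq_add_neg]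

section

variable {lam : ℝ} {c : ℝ → ℝ} {u : ℝ × ℝ → ℝ} {p : ℝ × ℝ}

lemma SolvesE2At.neg (h : SolvesE2At lam c u p) : SolvesE2At lam (-c) u p := by
  simpa [SolvesE2At, deriv.neg'] using h

lemma hasFDerivAt_riemannVar (hc : DifferentiableAt ℝ c (u p)) (hu : DifferentiableAt ℝ u p)
    (hu' : DifferentiableAt ℝ (fderiv ℝ u) p) :
    HasFDerivAt (riemannVar c u)
      (fderiv ℝ (pt u) p
        + (c (u p) • fderiv ℝ (px u) p + px u p • deriv c (u p) • fderiv ℝ u p)) p := by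
  have hcu : HasFDerivAt (fun q => c (u q)) (deriv c (u p) • fderiv ℝ u p) p :=
    hc.hasDerivAt.comp_hasFDerivAt p hu.hasFDerivAt
  have hpartial (e : ℝ × ℝ) : DifferentiableAt ℝ (fun q => fderiv ℝ u q e) p :=
    hu'.clm_apply (differentiableAt_const e)
  exact (hpartial (0, 1)).hasFDerivAt.add (hcu.mul (hpartial (1, 0)).hasFDerivAt)

lemma fderiv_riemannVar_apply (hc : DifferentiableAt ℝ c (u p)) (hu : DifferentiableAt ℝ u p)
    (hu' : DifferentiableAt ℝ (fderiv ℝ u) p) (e : ℝ × ℝ) :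
    fderiv ℝ (riemannVar c u) p e = fderiv ℝ (pt u) p e + c (u p) * fderiv ℝ (px u) p e
      + deriv c (u p) * fderiv ℝ u p e * px u p := by
  rw [(hasFDerivAt_riemannVar hc hu hu').fderiv]
  simp only [add_apply, smul_apply, smul_eq_mul]
  ring

lemma SolvesE2At.transport_riemannVar (h : SolvesE2At lam c u p)
    (hc : DifferentiableAt ℝ c (u p)) (hu : ∀ᶠ q in 𝓝 p, DifferentiableAt ℝ u q)
    (hu' : DifferentiableAt ℝ (fderiv ℝ u) p) :
    pt (riemannVar c u) p - c (u p) * px (riemannVar c u) p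
      = deriv c (u p) * px u p * (pt u p + (2 * lam - 1) * (c (u p) * px u p)) := by
  have hR (e : ℝ × ℝ) := fderiv_riemannVar_apply hc hu.self_of_nhds hu' e
  have hRt : pt (riemannVar c u) p
      = pt (pt u) p + c (u p) * pt (px u) p + deriv c (u p) * pt u p * px u p := hR (0, 1)
  have hRx : px (riemannVar c u) p
      = px (pt u) p + c (u p) * px (px u) p + deriv c (u p) * px u p * px u p := hR (1, 0)
  have hmixed : pt (px u) p = px (pt u) p := fderiv_fderiv_apply_comm_s14 hu hu' (1, 0) (0, 1)
  rw [SolvesE2At] at h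
  rw [hRt, hRx, hmixed]
  linear_combination h

lemma riemannVar_quadratic_form (lam : ℝ) (c : ℝ → ℝ) (u : ℝ × ℝ → ℝ) (p : ℝ × ℝ) :
    lam * riemannVar c u p ^ 2 + (lam - 1) * riemannVar (-c) u p ^ 2
        - (2 * lam - 1) * riemannVar c u p * riemannVar (-c) u p
      = 2 * (c (u p) * px u p) * (pt u p + (2 * lam - 1) * (c (u p) * px u p)) := by
  simp only [riemannVar, Pi.neg_apply]
  ring

lemma SolvesE2At.transport_two_mul_arctan_riemannVar (h : SolvesE2At lam c u p)
    (hc : DifferentiableAt ℝ c (u p)) (hc0 : c (u p) ≠ 0)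
    (hu : ∀ᶠ q in 𝓝 p, DifferentiableAt ℝ u q) (hu' : DifferentiableAt ℝ (fderiv ℝ u) p) :
    pt (fun q => 2 * arctan (riemannVar c u q)) p
        - c (u p) * px (fun q => 2 * arctan (riemannVar c u q)) p
      = (deriv c (u p) / c (u p)) * (1 / (1 + riemannVar c u p ^ 2)) *
          (lam * riemannVar c u p ^ 2 + (lam - 1) * riemannVar (-c) u p ^ 2
            - (2 * lam - 1) * riemannVar c u p * riemannVar (-c) u p) := by
  have hR := (hasFDerivAt_riemannVar hc hu.self_of_nhds hu').differentiableAt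
  calc
    _ = 2 / (1 + riemannVar c u p ^ 2)
          * (pt (riemannVar c u) p - c (u p) * px (riemannVar c u) p) := by
      simp only [pt, px, fderiv_two_mul_arctan_apply hR]
      ring
    _ = 2 / (1 + riemannVar c u p ^ 2)
          * (deriv c (u p) * px u p * (pt u p + (2 * lam - 1) * (c (u p) * px u p))) := by
      rw [h.transport_riemannVar hc hu hu']
    _ = _ := by
      rw [riemannVar_quadratic_form]
      field_simp

theorem stmt14_general (hc : DifferentiableAt ℝ c (u p)) (hc0 : c (u p) ≠ 0)
    (hu : ∀ᶠ q in 𝓝 p, DifferentiableAt ℝ u q) (hu' : DifferentiableAt ℝ (fderiv ℝ u) p)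
    (h : SolvesE2At lam c u p) :
    (pt (fun q => 2 * arctan (pt u q + c (u q) * px u q)) p
        - c (u p) * px (fun q => 2 * arctan (pt u q + c (u q) * px u q)) p
      = (deriv c (u p) / c (u p)) * (1 / (1 + (pt u p + c (u p) * px u p) ^ 2)) *
          (lam * (pt u p + c (u p) * px u p) ^ 2
            + (lam - 1) * (pt u p - c (u p) * px u p) ^ 2
            - (2 * lam - 1) * (pt u p + c (u p) * px u p)
                * (pt u p - c (u p) * px u p))) ∧
    (pt (fun q => 2 * arctan (pt u q - c (u q) * px u q)) p
        + c (u p) * px (fun q => 2 * arctan (pt u q - c (u q) * px u q)) p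
      = (deriv c (u p) / c (u p)) * (1 / (1 + (pt u p - c (u p) * px u p) ^ 2)) *
          (lam * (pt u p - c (u p) * px u p) ^ 2
            + (lam - 1) * (pt u p + c (u p) * px u p) ^ 2
            - (2 * lam - 1) * (pt u p + c (u p) * px u p)
                * (pt u p - c (u p) * px u p))) := by
  have hw := h.transport_two_mul_arctan_riemannVar hc hc0 hu hu'
  have hv := h.neg.transport_two_mul_arctan_riemannVar hc.neg (neg_ne_zero.mpr hc0) hu hu'
  simp only [neg_neg, deriv.neg, Pi.neg_apply, neg_div_neg_eq, neg_mul, sub_neg_eq_add] at hv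
  simp only [riemannVar_neg] at hw hv
  refine ⟨hw, hv.trans ?_⟩
  simp only [riemannVar]
  ring

end

/-- for a `C²` solution `u` of (E2)
`u_{tt} − c(u)² u_{xx} − 2λ c(u) c'(u) (u_x)² = 0`, the angle variables
`w := 2 arctan R`, `v := 2 arctan S` (with `R = u_t + c(u)u_x`, `S = u_t − c(u)u_x`)
satisfy
`w_t − c(u) w_x = (c'/c) (1/(1+R²)) [λR² + (λ−1)S² − (2λ−1)RS]` and
`v_t + c(u) v_x = (c'/c) (1/(1+S²)) [λS² + (λ−1)R² − (2λ−1)RS]`. -/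
theorem stmt14 (lam : ℝ) (c : ℝ → ℝ) (hc : ContDiff ℝ 1 c) (hcpos : ∀ z : ℝ, 0 < c z)
    (U : Set (ℝ × ℝ)) (hU : IsOpen U) (u : ℝ × ℝ → ℝ)
    (hu : ContDiffOn ℝ 2 u U)
    (hE2 : ∀ p ∈ U,
      pt (pt u) p - (c (u p)) ^ 2 * px (px u) p
        - 2 * lam * c (u p) * deriv c (u p) * (px u p) ^ 2 = 0) :
    ∀ p ∈ U,
      (pt (fun q => 2 * arctan (pt u q + c (u q) * px u q)) p
          - c (u p) * px (fun q => 2 * arctan (pt u q + c (u q) * px u q)) p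
        = (deriv c (u p) / c (u p)) * (1 / (1 + (pt u p + c (u p) * px u p) ^ 2)) *
            (lam * (pt u p + c (u p) * px u p) ^ 2
              + (lam - 1) * (pt u p - c (u p) * px u p) ^ 2
              - (2 * lam - 1) * (pt u p + c (u p) * px u p)
                  * (pt u p - c (u p) * px u p))) ∧
      (pt (fun q => 2 * arctan (pt u q - c (u q) * px u q)) p
          + c (u p) * px (fun q => 2 * arctan (pt u q - c (u q) * px u q)) p
        = (deriv c (u p) / c (u p)) * (1 / (1 + (pt u p - c (u p) * px u p) ^ 2)) *
            (lam * (pt u p - c (u p) * px u p) ^ 2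
              + (lam - 1) * (pt u p + c (u p) * px u p) ^ 2
              - (2 * lam - 1) * (pt u p + c (u p) * px u p)
                  * (pt u p - c (u p) * px u p))) := by
  intro p hp
  have hup : ContDiffAt ℝ 2 u p := hu.contDiffAt (hU.mem_nhds hp)
  exact stmt14_general (hc.differentiable one_ne_zero _) (hcpos _).ne'
    ((hu.differentiableOn two_ne_zero).eventually_differentiableAt (hU.mem_nhds hp))
    ((hup.fderiv_right le_rfl).differentiableAt one_ne_zero) (hE2 p hp)
end

section
/- Let λ > 0, let c : ℝ → ℝ be C¹ with c(u) > 0, and let u be a C³ function on an open subset U of ℝ² satisfying equation (E2): u_{tt} − c(u)² u_{xx} − 2λ c(u) c'(u) (u_x)² = 0. Let X be a C² function on U with X_t − c(u) X_x = 0 and X_x > 0 on U. Define R := u_t + c(u) u_x, S := u_t − c(u) u_x, and p := (1 + R²)^{1/(2λ)} / X_x. Then pointwise: p_t − c(u) p_x = (c'(u)/(2 c(u))) · ((1 + R²)^{1/(2λ)−1} / X_x) · [ ((λ−1)/λ) R S² − ((λ−1)/λ) R² S − R + S ]. -/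
/-!
Write `L = ∂_t - c(u) ∂_x`. Equation (E2) factors through `L`: since `L u = S` and
`2 c(u) u_x = R - S`, symmetry of second derivatives turns it into
`L R = c'(u) / (2 c(u)) * (R - S) * (λ R - (λ - 1) S)`. Differentiating `X_t = c(u) X_x` in `x`
shows that `X_x` also satisfies a transport equation, `L X_x = c'(u) / (2 c(u)) * (R - S) * X_x`.
As `L` is a derivation, these two equations determine `L p`.
-/

open Real

open Topology

section DirectionalDerivatives

variable {𝕜 E F : Type*} [NormedAddCommGroup E] [NormedAddCommGroup F]

theorem differentiableAt_fderiv_apply [NontriviallyNormedField 𝕜] [NormedSpace 𝕜 E]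
    [NormedSpace 𝕜 F] {f : E → F} {z : E} (hf : ContDiffAt 𝕜 2 f z) (v : E) :
    DifferentiableAt 𝕜 (fun q => fderiv 𝕜 f q v) z :=
  ((hf.fderiv_right (m := 1) (by norm_num)).differentiableAt one_ne_zero).clm_apply
    (differentiableAt_const v)

theorem fderiv_fderiv_apply_comm_s16 [RCLike 𝕜] [NormedSpace 𝕜 E] [NormedSpace 𝕜 F]
    {f : E → F} {z : E} (hf : ContDiffAt 𝕜 2 f z) (v w : E) :
    fderiv 𝕜 (fun q => fderiv 𝕜 f q v) z w = fderiv 𝕜 (fun q => fderiv 𝕜 f q w) z v := by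
  have hf' : DifferentiableAt 𝕜 (fderiv 𝕜 f) z :=
    (hf.fderiv_right (m := 1) (by norm_num)).differentiableAt one_ne_zero
  have hsymm : IsSymmSndFDerivAt 𝕜 f z := hf.isSymmSndFDerivAt (by simp)
  simpa [fderiv_clm_apply hf' (differentiableAt_const _)] using hsymm.eq w v

variable [NontriviallyNormedField 𝕜] [NormedSpace 𝕜 E]

theorem fderiv_scalar_comp_apply {g : 𝕜 → 𝕜} {f : E → 𝕜} {z : E}
    (hg : DifferentiableAt 𝕜 g (f z)) (hf : DifferentiableAt 𝕜 f z) (v : E) :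
    fderiv 𝕜 (fun q => g (f q)) z v = deriv g (f z) * fderiv 𝕜 f z v :=
  DFunLike.congr_fun (hg.hasDerivAt.comp_hasFDerivAt z hf.hasFDerivAt).fderiv v

theorem fderiv_fun_div_apply {f g : E → 𝕜} {z : E} (hf : DifferentiableAt 𝕜 f z)
    (hg : DifferentiableAt 𝕜 g z) (hgz : g z ≠ 0) (v : E) :
    fderiv 𝕜 (fun q => f q / g q) z v =
      (fderiv 𝕜 f z v * g z - f z * fderiv 𝕜 g z v) / g z ^ 2 := by
  have hinv : DifferentiableAt 𝕜 (fun q => (g q)⁻¹) z := hg.fun_inv hgz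
  simp only [div_eq_mul_inv, fderiv_fun_mul hf hinv, add_apply, smul_apply, smul_eq_mul,
    fderiv_scalar_comp_apply (differentiableAt_inv hgz) hg, deriv_inv]
  field_simp
  ring

end DirectionalDerivatives

theorem deriv_one_add_sq_rpow (β r : ℝ) :
    deriv (fun s : ℝ => (1 + s ^ 2) ^ β) r = 2 * β * r * (1 + r ^ 2) ^ (β - 1) := by
  have hpos : 0 < 1 + r ^ 2 := by positivity
  have h := (((hasDerivAt_id r).fun_pow 2).const_add 1).rpow_const (p := β) (Or.inl hpos.ne')
  simp only [id_eq] at h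
  rw [h.deriv]
  ring

theorem differentiable_one_add_sq_rpow (β : ℝ) :
    Differentiable ℝ (fun s : ℝ => (1 + s ^ 2) ^ β) := fun s =>
  (by fun_prop : DifferentiableAt ℝ (fun s : ℝ => 1 + s ^ 2) s).rpow_const
    (Or.inl (by positivity))

/-- The derivative `∂_t - a ∂_x` along the backward characteristics of a speed field `a`. The
field is a function on the plane, so the speed `c(u)` enters as `fun q => c (u q)`. -/
noncomputable def backwardDeriv (a f : ℝ × ℝ → ℝ) (z : ℝ × ℝ) : ℝ := pt f z - a z * px f z

/-- The Riemann variable `R = u_t + c(u) u_x`. -/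
noncomputable def riemannR (c : ℝ → ℝ) (u : ℝ × ℝ → ℝ) (z : ℝ × ℝ) : ℝ :=
  pt u z + c (u z) * px u z

/-- The Riemann variable `S = u_t - c(u) u_x`. -/
noncomputable def riemannS (c : ℝ → ℝ) (u : ℝ × ℝ → ℝ) (z : ℝ × ℝ) : ℝ :=
  pt u z - c (u z) * px u z

section BackwardDeriv

variable {a f g : ℝ × ℝ → ℝ} {z : ℝ × ℝ}

theorem px_pt_comm_s16 (hf : ContDiffAt ℝ 2 f z) : px (pt f) z = pt (px f) z :=
  fderiv_fderiv_apply_comm_s16 hf (0, 1) (1, 0)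

theorem differentiableAt_pt (hf : ContDiffAt ℝ 2 f z) : DifferentiableAt ℝ (pt f) z :=
  differentiableAt_fderiv_apply hf (0, 1)

theorem differentiableAt_px_s16 (hf : ContDiffAt ℝ 2 f z) : DifferentiableAt ℝ (px f) z :=
  differentiableAt_fderiv_apply hf (1, 0)

theorem px_fun_mul (hf : DifferentiableAt ℝ f z) (hg : DifferentiableAt ℝ g z) :
    px (fun q => f q * g q) z = px f z * g z + f z * px g z := by
  simp only [px, fderiv_fun_mul hf hg, add_apply, smul_apply, smul_eq_mul]
  ring

theorem backwardDeriv_eq_fderiv : backwardDeriv a f z = fderiv ℝ f z (-a z, 1) := by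
  have hdir : ((-a z, 1) : ℝ × ℝ) = (0, 1) - a z • (1, 0) := by simp
  rw [hdir, map_sub, map_smul, smul_eq_mul, backwardDeriv, pt, px]

theorem backwardDeriv_fun_add (hf : DifferentiableAt ℝ f z) (hg : DifferentiableAt ℝ g z) :
    backwardDeriv a (fun q => f q + g q) z = backwardDeriv a f z + backwardDeriv a g z := by
  simp only [backwardDeriv_eq_fderiv, fderiv_fun_add hf hg, add_apply]

theorem backwardDeriv_fun_mul (hf : DifferentiableAt ℝ f z) (hg : DifferentiableAt ℝ g z) :
    backwardDeriv a (fun q => f q * g q) z =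
      backwardDeriv a f z * g z + f z * backwardDeriv a g z := by
  simp only [backwardDeriv_eq_fderiv, fderiv_fun_mul hf hg, add_apply, smul_apply, smul_eq_mul]
  ring

theorem backwardDeriv_scalar_comp {h : ℝ → ℝ} (hh : DifferentiableAt ℝ h (f z))
    (hf : DifferentiableAt ℝ f z) :
    backwardDeriv a (fun q => h (f q)) z = deriv h (f z) * backwardDeriv a f z := by
  simp only [backwardDeriv_eq_fderiv, fderiv_scalar_comp_apply hh hf]

theorem backwardDeriv_fun_div (hf : DifferentiableAt ℝ f z) (hg : DifferentiableAt ℝ g z)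
    (hgz : g z ≠ 0) :
    backwardDeriv a (fun q => f q / g q) z =
      (backwardDeriv a f z * g z - f z * backwardDeriv a g z) / g z ^ 2 := by
  simp only [backwardDeriv_eq_fderiv, fderiv_fun_div_apply hf hg hgz]

theorem backwardDeriv_pt_add_mul_px (ha : DifferentiableAt ℝ a z) (hf : ContDiffAt ℝ 2 f z) :
    backwardDeriv a (fun q => pt f q + a q * px f q) z =
      pt (pt f) z - a z ^ 2 * px (px f) z + px f z * backwardDeriv a a z := by
  have hpx := differentiableAt_px_s16 hf
  rw [backwardDeriv_fun_add (differentiableAt_pt hf) (ha.fun_mul hpx),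
    backwardDeriv_fun_mul ha hpx]
  simp only [backwardDeriv, px_pt_comm_s16 hf]
  ring

theorem backwardDeriv_px_of_eventually_eq_zero (ha : DifferentiableAt ℝ a z)
    (hf : ContDiffAt ℝ 2 f z) (hchar : ∀ᶠ q in 𝓝 z, backwardDeriv a f q = 0) :
    backwardDeriv a (px f) z = px a z * px f z := by
  have hpt : pt f =ᶠ[𝓝 z] fun q => a q * px f q := hchar.mono fun q hq => sub_eq_zero.mp hq
  have hmixed : px (pt f) z = px a z * px f z + a z * px (px f) z := by
    rw [px, hpt.fderiv_eq, ← px, px_fun_mul ha (differentiableAt_px_s16 hf)]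
  rw [backwardDeriv, ← px_pt_comm_s16 hf, hmixed, add_sub_cancel_right]

theorem backwardDeriv_one_add_sq_rpow_div (β : ℝ) (hf : DifferentiableAt ℝ f z)
    (hg : DifferentiableAt ℝ g z) (hgz : g z ≠ 0) :
    backwardDeriv a (fun q => (1 + f q ^ 2) ^ β / g q) z =
      (1 + f z ^ 2) ^ (β - 1) / g z *
        (2 * β * f z * backwardDeriv a f z
          - (1 + f z ^ 2) * (backwardDeriv a g z / g z)) := by
  have hpow : DifferentiableAt ℝ (fun s : ℝ => (1 + s ^ 2) ^ β) (f z) :=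
    differentiable_one_add_sq_rpow β (f z)
  have hsplit : (1 + f z ^ 2) ^ β = (1 + f z ^ 2) ^ (β - 1) * (1 + f z ^ 2) := by
    have hpos : 0 < 1 + f z ^ 2 := by positivity
    rw [rpow_sub_one hpos.ne', div_mul_cancel₀ _ hpos.ne']
  rw [backwardDeriv_fun_div (hpow.fun_comp' z hf) hg hgz, backwardDeriv_scalar_comp hpow hf,
    deriv_one_add_sq_rpow, hsplit]
  field_simp

end BackwardDeriv

section RiemannVariables

variable {c : ℝ → ℝ} {u X : ℝ × ℝ → ℝ} {z : ℝ × ℝ}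

theorem px_eq_riemannR_sub_riemannS_div (hcz : c (u z) ≠ 0) :
    px u z = (riemannR c u z - riemannS c u z) / (2 * c (u z)) := by
  simp only [riemannR, riemannS]
  field_simp
  ring

theorem differentiableAt_riemannR (hc : DifferentiableAt ℝ c (u z)) (hu : ContDiffAt ℝ 2 u z) :
    DifferentiableAt ℝ (riemannR c u) z :=
  (differentiableAt_pt hu).fun_add
    ((hc.fun_comp' z (hu.differentiableAt two_ne_zero)).fun_mul (differentiableAt_px_s16 hu))

theorem backwardDeriv_riemannR {lam : ℝ} (hc : DifferentiableAt ℝ c (u z)) (hcz : c (u z) ≠ 0)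
    (hu : ContDiffAt ℝ 2 u z)
    (hE2 : pt (pt u) z - c (u z) ^ 2 * px (px u) z
      - 2 * lam * c (u z) * deriv c (u z) * px u z ^ 2 = 0) :
    backwardDeriv (fun q => c (u q)) (riemannR c u) z =
      deriv c (u z) / (2 * c (u z)) * (riemannR c u z - riemannS c u z) *
        (lam * riemannR c u z - (lam - 1) * riemannS c u z) := by
  have hdu : DifferentiableAt ℝ u z := hu.differentiableAt two_ne_zero
  have hspeed : backwardDeriv (fun q => c (u q)) (fun q => c (u q)) z =
      deriv c (u z) * riemannS c u z := backwardDeriv_scalar_comp hc hdu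
  calc backwardDeriv (fun q => c (u q)) (riemannR c u) z
      = pt (pt u) z - c (u z) ^ 2 * px (px u) z + px u z * (deriv c (u z) * riemannS c u z) := by
        rw [← hspeed]
        exact backwardDeriv_pt_add_mul_px (hc.fun_comp' z hdu) hu
    _ = deriv c (u z) * px u z * (2 * lam * c (u z) * px u z + riemannS c u z) := by
        linear_combination hE2
    _ = _ := by
        rw [px_eq_riemannR_sub_riemannS_div hcz]
        field_simp
        ring

theorem backwardDeriv_px_of_characteristic (hc : DifferentiableAt ℝ c (u z))
    (hcz : c (u z) ≠ 0) (hu : DifferentiableAt ℝ u z) (hX : ContDiffAt ℝ 2 X z)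
    (hXchar : ∀ᶠ q in 𝓝 z, backwardDeriv (fun q => c (u q)) X q = 0) :
    backwardDeriv (fun q => c (u q)) (px X) z =
      deriv c (u z) / (2 * c (u z)) * (riemannR c u z - riemannS c u z) * px X z := by
  have hspeed : px (fun q => c (u q)) z = deriv c (u z) * px u z :=
    fderiv_scalar_comp_apply hc hu (1, 0)
  rw [backwardDeriv_px_of_eventually_eq_zero (hc.fun_comp' z hu) hX hXchar, hspeed,
    px_eq_riemannR_sub_riemannS_div hcz]
  ring

theorem stmt16_general {lam : ℝ} (hlam : lam ≠ 0) (hc : DifferentiableAt ℝ c (u z))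
    (hcz : c (u z) ≠ 0) (hu : ContDiffAt ℝ 2 u z) (hX : ContDiffAt ℝ 2 X z)
    (hE2 : pt (pt u) z - c (u z) ^ 2 * px (px u) z
      - 2 * lam * c (u z) * deriv c (u z) * px u z ^ 2 = 0)
    (hXchar : ∀ᶠ q in 𝓝 z, backwardDeriv (fun q => c (u q)) X q = 0) (hXx : px X z ≠ 0) :
    backwardDeriv (fun q => c (u q))
        (fun q => (1 + riemannR c u q ^ 2) ^ (1 / (2 * lam)) / px X q) z =
      deriv c (u z) / (2 * c (u z)) *
        ((1 + riemannR c u z ^ 2) ^ (1 / (2 * lam) - 1) / px X z) *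
        ((lam - 1) / lam * riemannR c u z * riemannS c u z ^ 2
          - (lam - 1) / lam * riemannR c u z ^ 2 * riemannS c u z
          - riemannR c u z + riemannS c u z) := by
  rw [backwardDeriv_one_add_sq_rpow_div _ (differentiableAt_riemannR hc hu)
      (differentiableAt_px_s16 hX) hXx,
    backwardDeriv_riemannR hc hcz hu hE2,
    backwardDeriv_px_of_characteristic hc hcz (hu.differentiableAt two_ne_zero) hX hXchar,
    mul_div_cancel_right₀ _ hXx]
  field_simp
  ring

end RiemannVariables

/-- let `u` be a `C³` solution of (E2)
`u_{tt} − c(u)² u_{xx} − 2λ c(u) c'(u) (u_x)² = 0`, `X` a `C²` function with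
`X_t − c(u) X_x = 0` and `X_x > 0`.  With `R := u_t + c(u)u_x`, `S := u_t − c(u)u_x`
and `p := (1+R²)^{1/(2λ)}/X_x`, one has
`p_t − c(u) p_x = (c'/(2c)) ((1+R²)^{1/(2λ)−1}/X_x) [((λ−1)/λ)RS² − ((λ−1)/λ)R²S − R + S]`. -/
theorem stmt16 (lam : ℝ) (hlam : 0 < lam)
    (c : ℝ → ℝ) (hc : ContDiff ℝ 1 c) (hcpos : ∀ z : ℝ, 0 < c z)
    (U : Set (ℝ × ℝ)) (hU : IsOpen U) (u X : ℝ × ℝ → ℝ)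
    (hu : ContDiffOn ℝ 3 u U) (hX : ContDiffOn ℝ 2 X U)
    (hE2 : ∀ p ∈ U,
      pt (pt u) p - (c (u p)) ^ 2 * px (px u) p
        - 2 * lam * c (u p) * deriv c (u p) * (px u p) ^ 2 = 0)
    (hXchar : ∀ p ∈ U, pt X p - c (u p) * px X p = 0)
    (hXx : ∀ p ∈ U, 0 < px X p) :
    ∀ z ∈ U,
      pt (fun q => (1 + (pt u q + c (u q) * px u q) ^ 2) ^ (1/(2*lam)) / px X q) z
        - c (u z) * px (fun q =>
            (1 + (pt u q + c (u q) * px u q) ^ 2) ^ (1/(2*lam)) / px X q) z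
      = (deriv c (u z) / (2 * c (u z))) *
          ((1 + (pt u z + c (u z) * px u z) ^ 2) ^ (1/(2*lam) - 1) / px X z) *
          (((lam - 1)/lam) * (pt u z + c (u z) * px u z)
              * (pt u z - c (u z) * px u z) ^ 2
            - ((lam - 1)/lam) * (pt u z + c (u z) * px u z) ^ 2
              * (pt u z - c (u z) * px u z)
            - (pt u z + c (u z) * px u z) + (pt u z - c (u z) * px u z)) := by
  intro z hz
  have hUz : U ∈ 𝓝 z := hU.mem_nhds hz
  exact stmt16_general hlam.ne' (hc.differentiable one_ne_zero (u z)) (hcpos (u z)).ne'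
    ((hu.contDiffAt hUz).of_le (by norm_num)) (hX.contDiffAt hUz) (hE2 z hz)
    (Filter.mem_of_superset hUz hXchar) (hXx z hz).ne'
end
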